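/- arXiv:1606.08122 — 2 statements merged into one kernel-verified Lean document; each statement's English description precedes it below -/
import Mathlib

section
/- Let k ≥ 1 and m, a_1, a_2, …, a_k ≥ 2 be integers. Then there exists a spherical latin bitrade whose canonical group is isomorphic to the direct sum Z_{m·a_1} ⊕ Z_{m·a_2} ⊕ … ⊕ Z_{m·a_k}. -/
/-- A partial latin square on row set `R`, column set `C` and symbol set `S` (given as
pairwise disjoint types): a finite set of triples such that any two distinct triples agree
in at most one coordinate, and every row, column and symbol occurs in some triple. -/
def IsPartialLatinSquare {R C S : Type} (P : Finset (R × C × S)) : Prop :=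
  (∀ t₁ ∈ P, ∀ t₂ ∈ P, t₁ ≠ t₂ →
      ¬(t₁.1 = t₂.1 ∧ t₁.2.1 = t₂.2.1) ∧
      ¬(t₁.1 = t₂.1 ∧ t₁.2.2 = t₂.2.2) ∧
      ¬(t₁.2.1 = t₂.2.1 ∧ t₁.2.2 = t₂.2.2)) ∧
  (∀ r : R, ∃ t ∈ P, t.1 = r) ∧
  (∀ c : C, ∃ t ∈ P, t.2.1 = c) ∧
  (∀ s : S, ∃ t ∈ P, t.2.2 = s)

/-- The latin bitrade condition: for each triple `(r,c,s) ∈ W` there are unique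
`r' ≠ r`, `c' ≠ c`, `s' ≠ s` with `(r',c,s), (r,c',s), (r,c,s') ∈ B`. -/
def TradeCond {R C S : Type} (W B : Finset (R × C × S)) : Prop :=
  ∀ t ∈ W,
    (∃! r' : R, r' ≠ t.1 ∧ (r', t.2.1, t.2.2) ∈ B) ∧
    (∃! c' : C, c' ≠ t.2.1 ∧ (t.1, c', t.2.2) ∈ B) ∧
    (∃! s' : S, s' ≠ t.2.2 ∧ (t.1, t.2.1, s') ∈ B)

/-- A spherical latin bitrade: a connected latin bitrade `(W,B)` on finite row, column and
symbol sets `R`, `C`, `S` with `|R| + |C| + |S| = |W| + 2`.  (Connectedness says there is no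
latin bitrade `(W',B')` with `W' ⊊ W` and `B' ⊊ B`; for subsets of `W` and `B` the
"agree in at most one coordinate" condition is inherited, and the occurrence condition is
automatic on the sets of rows, columns and symbols actually occupied, so the substantive
conditions on a sub-bitrade are nonemptiness and the two trade conditions.) -/
structure SphericalLatinBitrade where
  R : Type
  C : Type
  S : Type
  instR : Fintype R
  instC : Fintype C
  instS : Fintype S
  W : Finset (R × C × S)
  B : Finset (R × C × S)
  W_nonempty : W.Nonempty
  B_nonempty : B.Nonempty
  W_pls : IsPartialLatinSquare W
  B_pls : IsPartialLatinSquare B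
  tradeWB : TradeCond W B
  tradeBW : TradeCond B W
  connected : ¬ ∃ (W' B' : Finset (R × C × S)), W' ⊂ W ∧ B' ⊂ B ∧
      W'.Nonempty ∧ B'.Nonempty ∧ TradeCond W' B' ∧ TradeCond B' W'
  spherical : @Fintype.card R instR + @Fintype.card C instC + @Fintype.card S instS
      = W.card + 2

/-- The subgroup of relations `r + c + s = 0`, for `(r,c,s) ∈ W`, in the free abelian group
on `R ⊔ C ⊔ S`. -/
def bitradeRelations (T : SphericalLatinBitrade) :
    AddSubgroup (FreeAbelianGroup (T.R ⊕ T.C ⊕ T.S)) :=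
  AddSubgroup.closure
    ((fun t : T.R × T.C × T.S =>
        FreeAbelianGroup.of (Sum.inl t.1) +
        FreeAbelianGroup.of (Sum.inr (Sum.inl t.2.1)) +
        FreeAbelianGroup.of (Sum.inr (Sum.inr t.2.2))) '' (T.W : Set (T.R × T.C × T.S)))

/-- The group `A_W`: the free abelian group on `R ⊔ C ⊔ S` modulo the relations
`r + c + s = 0` for `(r,c,s) ∈ W`. -/
abbrev groupAW (T : SphericalLatinBitrade) : Type :=
  FreeAbelianGroup (T.R ⊕ T.C ⊕ T.S) ⧸ bitradeRelations T

/-- The canonical group of a spherical latin bitrade: the torsion subgroup of `A_W`. -/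
abbrev CanonicalGroup (T : SphericalLatinBitrade) : Type :=
  AddCommGroup.torsion (groupAW T)

/-!
An Eulerian digraph on the sphere whose edges alternate between incoming and outgoing around every
vertex yields a spherical bitrade: its rows, columns and symbols are the vertices, the left faces
and the right faces, and an edge gives the triples made of its two faces and its head in `W`, its
tail in `B`.  Replacing an edge by `2 * n + 1` parallel edges of alternating direction and
eliminating the faces of the digons adds `n • (hd - tl)` to the relation of the edge in `A_W`.

Apply this to a fan whose path `y (k - 1), x (k - 1), …, y 0, x 0` is joined to a hub by doubled
spokes, one spoke of each pair being replaced by a bundle.  Measured from the hub and once the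
faces are eliminated, the relations are `m • x i = y i + y (i - 1)` and `a i • y i = 0`, with
`y (-1) = 0`.  In terms of `z i = x i - z (i - 1)` and `z (-1) = 0` they become `y i = m • z i` and
`(m * a i) • z i = 0`.
-/

/-- The two coordinate conditions on the vertices `hd e`, `tl e` and the face `face e` beside each
edge `e` of a digraph which say that every face is bounded by a directed closed walk without
repeated vertices: an edge is determined by its face and either end, and is followed along its face
by some edge.  The walk traverses its edges from `hd` to `tl` (so `hd e' = tl e` for the next edge
`e'`), and swapping `hd` and `tl` reverses it. -/
structure IsFaceLabelling {E R F : Type*} (hd tl : E → R) (face : E → F) : Prop where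
  eq_of_hd : ∀ e e', hd e = hd e' → face e = face e' → e = e'
  eq_of_tl : ∀ e e', tl e = tl e' → face e = face e' → e = e'
  exists_next : ∀ e, ∃ e', hd e' = tl e ∧ face e' = face e
  surjective : Function.Surjective face

namespace IsFaceLabelling

variable {E R F : Type*} {hd tl : E → R} {face : E → F}

theorem exists_prev [Finite E] (h : IsFaceLabelling hd tl face) (e : E) :
    ∃ e', tl e' = hd e ∧ face e' = face e := by
  choose next hd_next face_next using h.exists_next
  have next_injective : Function.Injective next := fun a b hab =>
    h.eq_of_tl a b (by rw [← hd_next, hab, hd_next]) (by rw [← face_next, hab, face_next])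
  obtain ⟨e', rfl⟩ := Finite.surjective_of_injective next_injective e
  exact ⟨e', (hd_next e').symm, (face_next e').symm⟩

theorem reverse [Finite E] (h : IsFaceLabelling hd tl face) : IsFaceLabelling tl hd face where
  eq_of_hd := h.eq_of_tl
  eq_of_tl := h.eq_of_hd
  exists_next := h.exists_prev
  surjective := h.surjective

theorem comp_perm (h : IsFaceLabelling hd tl face) (σ : Equiv.Perm E)
    (hhd : ∀ e, hd (σ e) = hd e) (htl : ∀ e, tl (σ e) = tl e) :
    IsFaceLabelling hd tl (face ∘ σ) where
  eq_of_hd e e' he hf := σ.injective (h.eq_of_hd _ _ (by rwa [hhd, hhd]) hf)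
  eq_of_tl e e' he hf := σ.injective (h.eq_of_tl _ _ (by rwa [htl, htl]) hf)
  exists_next e := by
    obtain ⟨e', hhd', hf⟩ := h.exists_next (σ e)
    exact ⟨σ.symm e', by rw [← hhd, σ.apply_symm_apply, hhd', htl], by simpa using hf⟩
  surjective := h.surjective.comp σ.surjective

end IsFaceLabelling

/-- An Eulerian digraph with vertex set `R` and edge set `E` embedded in the sphere so that the
edges around each vertex alternate between incoming and outgoing.  Then each face lies either to
the left of all of its edges or to the right of all of them; `C` is the set of left faces and `S`
the set of right faces.  The embedding is recorded by the incidence maps only, and the genus by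
Euler's formula `euler`. -/
structure SphericalDigraph (R C S E : Type) [Fintype R] [Fintype C] [Fintype S] [Fintype E] where
  hd : E → R
  tl : E → R
  lf : E → C
  rt : E → S
  hd_ne_tl : ∀ e, hd e ≠ tl e
  hd_surjective : Function.Surjective hd
  left : IsFaceLabelling hd tl lf
  right : IsFaceLabelling hd tl rt
  eq_of_faces : ∀ e e', lf e = lf e' → rt e = rt e' → e = e'
  connected : ∀ P : E → Prop,
    (∀ e e', hd e' = tl e → (lf e' = lf e ∨ rt e' = rt e) → (P e ↔ P e')) → ∀ e e', P e → P e'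
  euler : Fintype.card R + Fintype.card C + Fintype.card S = Fintype.card E + 2

namespace SphericalDigraph

variable {R C S E : Type} [Fintype R] [Fintype C] [Fintype S] [Fintype E]

theorem nonempty (M : SphericalDigraph R C S E) : Nonempty E := by
  by_contra hE
  rw [not_nonempty_iff] at hE
  have := M.hd_surjective.isEmpty
  have := M.left.surjective.isEmpty
  have := M.right.surjective.isEmpty
  simpa using M.euler

/-- The digraph with all edges reversed, which exchanges the two mates of the bitrade of `M`.  It
keeps the names of the left and right faces, so that it is a mirror image of an embedding. -/
def reverse (M : SphericalDigraph R C S E) : SphericalDigraph R C S E where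
  hd := M.tl
  tl := M.hd
  lf := M.lf
  rt := M.rt
  hd_ne_tl e := (M.hd_ne_tl e).symm
  hd_surjective r := by
    obtain ⟨e, rfl⟩ := M.hd_surjective r
    obtain ⟨e', he', -⟩ := M.left.exists_prev e
    exact ⟨e', he'⟩
  left := M.left.reverse
  right := M.right.reverse
  eq_of_faces := M.eq_of_faces
  connected P hP := M.connected P fun e e' hv hf =>
    (hP e' e hv.symm (hf.imp Eq.symm Eq.symm)).symm
  euler := M.euler

/-! ### The bitrade of a spherical digraph -/

/-- The triple of an edge in the first mate; its triple in the second mate is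
`M.reverse.triple e`. -/
def triple (M : SphericalDigraph R C S E) : E ↪ R × C × S where
  toFun e := (M.hd e, M.lf e, M.rt e)
  inj' e e' h := M.eq_of_faces e e' (congrArg (·.2.1) h) (congrArg (·.2.2) h)

/-- The first mate of the bitrade of `M`; the second one is `M.reverse.mate`. -/
def mate (M : SphericalDigraph R C S E) : Finset (R × C × S) :=
  Finset.univ.map M.triple

theorem mem_mate (M : SphericalDigraph R C S E) {r : R} {c : C} {s : S} :
    (r, c, s) ∈ M.mate ↔ ∃ e, M.hd e = r ∧ M.lf e = c ∧ M.rt e = s := by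
  simp [mate, triple, DFunLike.coe]

theorem triple_mem_mate (M : SphericalDigraph R C S E) (e : E) : M.triple e ∈ M.mate :=
  Finset.mem_map_of_mem _ (Finset.mem_univ e)

theorem isPartialLatinSquare_mate (M : SphericalDigraph R C S E) :
    IsPartialLatinSquare M.mate := by
  refine ⟨?_, fun r => ?_, fun c => ?_, fun s => ?_⟩
  · rintro ⟨_, _, _⟩ h₁ ⟨_, _, _⟩ h₂ hne
    obtain ⟨e, rfl, rfl, rfl⟩ := M.mem_mate.1 h₁
    obtain ⟨e', rfl, rfl, rfl⟩ := M.mem_mate.1 h₂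
    have hee' : e ≠ e' := fun h => hne (by rw [h])
    exact ⟨fun h => hee' (M.left.eq_of_hd _ _ h.1 h.2),
      fun h => hee' (M.right.eq_of_hd _ _ h.1 h.2), fun h => hee' (M.eq_of_faces _ _ h.1 h.2)⟩
  · obtain ⟨e, rfl⟩ := M.hd_surjective r
    exact ⟨_, M.triple_mem_mate e, rfl⟩
  · obtain ⟨e, rfl⟩ := M.left.surjective c
    exact ⟨_, M.triple_mem_mate e, rfl⟩
  · obtain ⟨e, rfl⟩ := M.right.surjective s
    exact ⟨_, M.triple_mem_mate e, rfl⟩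

theorem tradeCond_mate_reverse (M : SphericalDigraph R C S E) :
    TradeCond M.mate M.reverse.mate := by
  rintro ⟨_, _, _⟩ ht
  obtain ⟨e, rfl, rfl, rfl⟩ := M.mem_mate.1 ht
  simp only [mem_mate, reverse]
  refine ⟨⟨M.tl e, ⟨(M.hd_ne_tl e).symm, e, rfl, rfl, rfl⟩, ?_⟩, ?_, ?_⟩
  · rintro r ⟨-, e', rfl, hl, hr⟩
    rw [M.eq_of_faces e' e hl hr]
  · obtain ⟨p, hp, hr⟩ := M.right.exists_prev e
    refine ⟨M.lf p, ⟨fun hl => M.hd_ne_tl e ?_, p, hp, rfl, hr⟩, ?_⟩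
    · rw [← hp, M.eq_of_faces p e hl hr]
    · rintro c ⟨-, e', hv, rfl, hr'⟩
      rw [M.right.eq_of_tl e' p (hv.trans hp.symm) (hr'.trans hr.symm)]
  · obtain ⟨p, hp, hl⟩ := M.left.exists_prev e
    refine ⟨M.rt p, ⟨fun hr => M.hd_ne_tl e ?_, p, hp, hl, rfl⟩, ?_⟩
    · rw [← hp, M.eq_of_faces p e hl hr]
    · rintro s ⟨-, e', hv, hl', rfl⟩
      rw [M.left.eq_of_tl e' p (hv.trans hp.symm) (hl'.trans hl.symm)]

section SubTrade

variable {W' B' : Finset (R × C × S)}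

theorem triple_reverse_mem_of_triple_mem (M : SphericalDigraph R C S E)
    (hB : B' ⊆ M.reverse.mate) (hWB : TradeCond W' B') {e : E} (he : M.triple e ∈ W') :
    M.reverse.triple e ∈ B' := by
  obtain ⟨r, ⟨-, hr⟩, -⟩ := (hWB _ he).1
  obtain ⟨e', rfl, hl, hr'⟩ := M.reverse.mem_mate.1 (hB hr)
  rw [M.eq_of_faces e' e hl hr'] at hr
  exact hr

theorem triple_reverse_mem_of_consecutive (M : SphericalDigraph R C S E)
    (hB : B' ⊆ M.reverse.mate) (hWB : TradeCond W' B') {e e' : E} (hv : M.tl e' = M.hd e)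
    (hf : M.lf e' = M.lf e ∨ M.rt e' = M.rt e) (he : M.triple e ∈ W') :
    M.reverse.triple e' ∈ B' := by
  rcases hf with hl | hr
  · obtain ⟨s, ⟨-, hs⟩, -⟩ := (hWB _ he).2.2
    obtain ⟨e₁, hv₁, hl₁, rfl⟩ := M.reverse.mem_mate.1 (hB hs)
    obtain rfl := M.left.eq_of_tl e' e₁ (hv.trans hv₁.symm) (hl.trans hl₁.symm)
    have triple_eq : M.reverse.triple e' = (M.hd e, M.lf e, M.rt e') :=
      Prod.ext hv (Prod.ext hl rfl)
    exact triple_eq ▸ hs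
  · obtain ⟨c, ⟨-, hc⟩, -⟩ := (hWB _ he).2.1
    obtain ⟨e₁, hv₁, rfl, hr₁⟩ := M.reverse.mem_mate.1 (hB hc)
    obtain rfl := M.right.eq_of_tl e' e₁ (hv.trans hv₁.symm) (hr.trans hr₁.symm)
    have triple_eq : M.reverse.triple e' = (M.hd e, M.lf e', M.rt e) :=
      Prod.ext hv (Prod.ext rfl hr)
    exact triple_eq ▸ hc

theorem mate_subset_of_tradeCond (M : SphericalDigraph R C S E) (hW : W' ⊆ M.mate)
    (hB : B' ⊆ M.reverse.mate) (hne : W'.Nonempty) (hWB : TradeCond W' B')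
    (hBW : TradeCond B' W') : M.mate ⊆ W' := by
  have mem_iff : ∀ e e', M.hd e' = M.tl e → (M.lf e' = M.lf e ∨ M.rt e' = M.rt e) →
      (M.triple e ∈ W' ↔ M.triple e' ∈ W') := fun e e' hv hf =>
    ⟨fun he => M.reverse.triple_reverse_mem_of_consecutive hW hBW hv hf
        (M.triple_reverse_mem_of_triple_mem hB hWB he),
      fun he' => M.reverse.triple_reverse_mem_of_triple_mem hW hBW
        (M.triple_reverse_mem_of_consecutive hB hWB hv.symm (hf.imp Eq.symm Eq.symm) he')⟩
  obtain ⟨⟨_, _, _⟩, ht₀⟩ := hne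
  obtain ⟨e₀, rfl, rfl, rfl⟩ := M.mem_mate.1 (hW ht₀)
  rintro ⟨_, _, _⟩ ht
  obtain ⟨e, rfl, rfl, rfl⟩ := M.mem_mate.1 ht
  exact M.connected (M.triple · ∈ W') mem_iff e₀ e ht₀

end SubTrade

/-- The spherical latin bitrade of a spherical digraph: the rows are the vertices, the columns the
left faces, the symbols the right faces, and each edge contributes one triple to either mate. -/
def toBitrade (M : SphericalDigraph R C S E) : SphericalLatinBitrade where
  R := R
  C := C
  S := S
  instR := inferInstance
  instC := inferInstance
  instS := inferInstance
  W := M.mate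
  B := M.reverse.mate
  W_nonempty := M.nonempty.elim fun e => ⟨_, M.triple_mem_mate e⟩
  B_nonempty := M.nonempty.elim fun e => ⟨_, M.reverse.triple_mem_mate e⟩
  W_pls := M.isPartialLatinSquare_mate
  B_pls := M.reverse.isPartialLatinSquare_mate
  tradeWB := M.tradeCond_mate_reverse
  tradeBW := M.reverse.tradeCond_mate_reverse
  connected := by
    rintro ⟨W', B', hW, hB, hne, -, hWB, hBW⟩
    exact hW.2 (M.mate_subset_of_tradeCond hW.1 hB.1 hne hWB hBW)
  spherical := by rw [M.euler, mate, Finset.card_map, Finset.card_univ]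

end SphericalDigraph

/-! ### The group of a bitrade -/

namespace SphericalLatinBitrade

variable (T : SphericalLatinBitrade)

/-- The class in `A_W` of a row, column or symbol. -/
def generator (v : T.R ⊕ T.C ⊕ T.S) : groupAW T :=
  QuotientAddGroup.mk (FreeAbelianGroup.of v)

theorem generator_relation {t : T.R × T.C × T.S} (ht : t ∈ T.W) :
    T.generator (.inl t.1) + T.generator (.inr (.inl t.2.1)) +
      T.generator (.inr (.inr t.2.2)) = 0 :=
  (QuotientAddGroup.eq_zero_iff _).2 (AddSubgroup.subset_closure ⟨t, ht, rfl⟩)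

theorem exists_addMonoidHom_generator {A : Type*} [AddCommGroup A] (g : T.R ⊕ T.C ⊕ T.S → A)
    (hg : ∀ t ∈ T.W, g (.inl t.1) + g (.inr (.inl t.2.1)) + g (.inr (.inr t.2.2)) = 0) :
    ∃ f : groupAW T →+ A, ∀ v, f (T.generator v) = g v := by
  have relations_le : bitradeRelations T ≤ (FreeAbelianGroup.lift g).ker := by
    refine (AddSubgroup.closure_le _).2 ?_
    rintro _ ⟨t, ht, rfl⟩
    simpa using hg t ht
  exact ⟨QuotientAddGroup.lift _ _ relations_le, fun v => FreeAbelianGroup.lift_apply_of g v⟩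

theorem eq_top_of_generator_mem {K : AddSubgroup (groupAW T)} (hK : ∀ v, T.generator v ∈ K) :
    K = ⊤ := by
  refine (AddSubgroup.eq_top_iff' K).2 fun x => ?_
  obtain ⟨y, rfl⟩ := QuotientAddGroup.mk_surjective x
  induction y using FreeAbelianGroup.induction_on with
  | zero => exact K.zero_mem
  | of v => exact hK v
  | neg v h => exact K.neg_mem h
  | add a b ha hb => exact K.add_mem ha hb

end SphericalLatinBitrade

namespace SphericalDigraph

variable {R C S E : Type} [Fintype R] [Fintype C] [Fintype S] [Fintype E]
  {M : SphericalDigraph R C S E} {A B : Type*} [AddCommGroup A] [AddCommGroup B]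

/-- A solution in `A` of the bitrade relations of `M` in which the relation of each edge `e` carries
the correction `n e • (hd e - tl e)`.  By `Labelling.contract` and `Labelling.extend` these are the
solutions of the uncorrected relations of `M.expand n`. -/
@[ext]
structure Labelling (M : SphericalDigraph R C S E) (n : E → ℕ) (A : Type*) [AddCommGroup A] where
  row : R → A
  col : C → A
  sym : S → A
  rel : ∀ e, row (M.hd e) + col (M.lf e) + sym (M.rt e) +
    n e • (row (M.hd e) - row (M.tl e)) = 0

namespace Labelling

variable {n : E → ℕ}

/-- The image of a labelling under a homomorphism. -/
@[simps]
def map (L : M.Labelling n A) (f : A →+ B) : M.Labelling n B where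
  row r := f (L.row r)
  col c := f (L.col c)
  sym s := f (L.sym s)
  rel e := by simpa using congrArg f (L.rel e)

variable {K : AddSubgroup A}

theorem sym_rt_mem_iff (L : M.Labelling n A) (hrow : ∀ r, L.row r ∈ K) (e : E) :
    L.sym (M.rt e) ∈ K ↔ L.col (M.lf e) ∈ K := by
  have hsum : L.col (M.lf e) + L.sym (M.rt e) ∈ K := by
    rw [show L.col (M.lf e) + L.sym (M.rt e) =
      -(L.row (M.hd e) + n e • (L.row (M.hd e) - L.row (M.tl e))) by
        rw [eq_neg_iff_add_eq_zero, ← L.rel e]; abel]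
    exact K.neg_mem (K.add_mem (hrow _) (K.nsmul_mem (K.sub_mem (hrow _) (hrow _)) _))
  exact ⟨fun h => (K.add_mem_cancel_right h).1 hsum, fun h => (K.add_mem_cancel_left h).1 hsum⟩

theorem col_mem (L : M.Labelling n A) (hrow : ∀ r, L.row r ∈ K) {c₀ : C} (hc₀ : L.col c₀ ∈ K)
    (c : C) : L.col c ∈ K := by
  obtain ⟨e₀, rfl⟩ := M.left.surjective c₀
  obtain ⟨e, rfl⟩ := M.left.surjective c
  refine M.connected (fun e => L.col (M.lf e) ∈ K) (fun e e' _ hf => ?_) e₀ e hc₀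
  rcases hf with hl | hr
  · rw [hl]
  · rw [← L.sym_rt_mem_iff hrow, ← L.sym_rt_mem_iff hrow, hr]

theorem sym_mem (L : M.Labelling n A) (hrow : ∀ r, L.row r ∈ K) {c₀ : C} (hc₀ : L.col c₀ ∈ K)
    (s : S) : L.sym s ∈ K := by
  obtain ⟨e, rfl⟩ := M.right.surjective s
  exact (L.sym_rt_mem_iff hrow e).2 (L.col_mem hrow hc₀ _)

end Labelling

/-- The labelling of `M` by the generators of the group `A_W` of its bitrade. -/
def universalLabelling (M : SphericalDigraph R C S E) : M.Labelling 0 (groupAW M.toBitrade) where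
  row r := M.toBitrade.generator (.inl r)
  col c := M.toBitrade.generator (.inr (.inl c))
  sym s := M.toBitrade.generator (.inr (.inr s))
  rel e := by
    have triple_mem : (M.hd e, M.lf e, M.rt e) ∈ M.toBitrade.W := M.triple_mem_mate e
    rw [Pi.zero_apply, zero_nsmul, add_zero, M.toBitrade.generator_relation triple_mem]

theorem exists_map_universalLabelling_eq (L : M.Labelling 0 A) :
    ∃ f, M.universalLabelling.map f = L := by
  have relation : ∀ t ∈ M.mate, L.row t.1 + L.col t.2.1 + L.sym t.2.2 = 0 := by
    rintro ⟨_, _, _⟩ ht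
    obtain ⟨e, rfl, rfl, rfl⟩ := M.mem_mate.1 ht
    simpa using L.rel e
  obtain ⟨f, hf⟩ := M.toBitrade.exists_addMonoidHom_generator
    (Sum.elim L.row (Sum.elim L.col L.sym)) relation
  exact ⟨f, Labelling.ext (funext fun r => hf (.inl r)) (funext fun c => hf (.inr (.inl c)))
    (funext fun s => hf (.inr (.inr s)))⟩

theorem eq_top_of_universalLabelling_mem {K : AddSubgroup (groupAW M.toBitrade)}
    (hrow : ∀ r, M.universalLabelling.row r ∈ K) {c₀ : C}
    (hc₀ : M.universalLabelling.col c₀ ∈ K) : K = ⊤ :=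
  M.toBitrade.eq_top_of_generator_mem <| by
    rintro (r | c | s)
    · exact hrow r
    · exact M.universalLabelling.col_mem hrow hc₀ c
    · exact M.universalLabelling.sym_mem hrow hc₀ s

end SphericalDigraph

/-! ### Replacing edges by alternating bundles -/

/-- The edges obtained when each `e : E` is replaced by a bundle of `2 * n e + 1` parallel edges of
alternating direction: `n e + 1` forward copies and `n e` backward copies, with
`forward 0, backward 0, forward 1, …, forward (n e)` listing them from right to left.  The `2 * n e`
digons between them have left faces and right faces indexed by `Σ e, Fin (n e)`. -/
abbrev EdgeBundle {E : Type*} (n : E → ℕ) : Type _ :=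
  (Σ e, Fin (n e + 1)) ⊕ Σ e, Fin (n e)

namespace EdgeBundle

variable {E F R : Type*} {n : E → ℕ}

/-- The edge replaced by the bundle of a given edge. -/
def base : EdgeBundle n → E :=
  Sum.elim Sigma.fst Sigma.fst

/-- The number of edges of the same direction to the right of an edge in its bundle. -/
def position : EdgeBundle n → ℕ :=
  Sum.elim (fun p => p.2) (fun p => p.2)

/-- The end of an edge of a bundle, given the corresponding ends `v` of the forward copies and `w`
of the backward copies. -/
def vertex (v w : E → R) : EdgeBundle n → R :=
  Sum.elim (fun p => v p.1) (fun p => w p.1)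

/-- The left face of an edge of a bundle, given the left faces `f` of the replaced edges. -/
def face (f : E → F) : EdgeBundle n → F ⊕ Σ e, Fin (n e) :=
  Sum.elim
    (fun p => Fin.lastCases (motive := fun _ => F ⊕ Σ e, Fin (n e)) (.inl (f p.1))
      (fun t => .inr ⟨p.1, t⟩) p.2)
    .inr

/-- The reversal of the order inside each bundle; `face f ∘ flip` gives right faces. -/
def flip : Equiv.Perm (EdgeBundle n) :=
  Equiv.sumCongr (Equiv.sigmaCongrRight fun _ => Fin.revPerm)
    (Equiv.sigmaCongrRight fun _ => Fin.revPerm)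

@[simp]
theorem vertex_inl (v w : E → R) (p : Σ e, Fin (n e + 1)) : vertex v w (.inl p) = v p.1 := rfl

@[simp]
theorem vertex_inr (v w : E → R) (p : Σ e, Fin (n e)) : vertex v w (.inr p) = w p.1 := rfl

@[simp]
theorem face_inl_last (f : E → F) (e : E) :
    face (n := n) f (.inl ⟨e, Fin.last _⟩) = .inl (f e) :=
  Fin.lastCases_last (motive := fun _ => F ⊕ Σ e, Fin (n e)) ..

@[simp]
theorem face_inl_castSucc (f : E → F) (e : E) (t : Fin (n e)) :
    face f (.inl ⟨e, t.castSucc⟩) = .inr ⟨e, t⟩ :=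
  Fin.lastCases_castSucc (motive := fun _ => F ⊕ Σ e, Fin (n e)) ..

@[simp]
theorem face_inr (f : E → F) (p : Σ e, Fin (n e)) : face f (.inr p) = .inr p := rfl

@[simp]
theorem flip_inl (e : E) (t : Fin (n e + 1)) : flip (n := n) (.inl ⟨e, t⟩) = .inl ⟨e, t.rev⟩ := rfl

@[simp]
theorem flip_inr (e : E) (t : Fin (n e)) : flip (n := n) (.inr ⟨e, t⟩) = .inr ⟨e, t.rev⟩ := rfl

@[simp]
theorem vertex_flip (v w : E → R) (b : EdgeBundle n) : vertex v w (flip b) = vertex v w b := by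
  rcases b with b | b <;> rfl

@[simp]
theorem base_flip (b : EdgeBundle n) : base (flip b) = base b := by
  rcases b with b | b <;> rfl

theorem forward_backward_cases {P : EdgeBundle n → Prop}
    (last : ∀ e, P (.inl ⟨e, Fin.last _⟩))
    (castSucc : ∀ e (t : Fin (n e)), P (.inl ⟨e, t.castSucc⟩))
    (backward : ∀ e t, P (.inr ⟨e, t⟩)) (b : EdgeBundle n) : P b := by
  rcases b with ⟨e, t⟩ | ⟨e, t⟩
  · exact Fin.lastCases (last e) (castSucc e) t
  · exact backward e t

theorem apply_base_eq_of_face_eq {f : E → F} {b b' : EdgeBundle n} (h : face f b = face f b') :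
    f (base b) = f (base b') := by
  induction b using forward_backward_cases <;> induction b' using forward_backward_cases <;>
    simp_all [base]

theorem position_eq_of_face_eq {f : E → F} {b b' : EdgeBundle n} (hb : base b = base b')
    (hf : face f b = face f b') : position b = position b' := by
  induction b using forward_backward_cases <;> induction b' using forward_backward_cases <;>
    simp only [base, position, Sum.elim_inl, Sum.elim_inr] at hb ⊢ <;>
    grind [face_inl_last, face_inl_castSucc, face_inr]

theorem eq_of_vertex_of_face {v w : E → R} {f : E → F} (hvw : ∀ e, v e ≠ w e)
    (hvf : ∀ e e', v e = v e' → f e = f e' → e = e') (b b' : EdgeBundle n)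
    (hv : vertex v w b = vertex v w b') (hf : face f b = face f b') : b = b' := by
  induction b using forward_backward_cases <;> induction b' using forward_backward_cases
  case last.last e e' =>
    rw [face_inl_last, face_inl_last, Sum.inl.injEq] at hf
    rw [hvf e e' hv hf]
  all_goals grind [vertex_inl, vertex_inr, face_inl_last, face_inl_castSucc, face_inr]

theorem eq_of_face_of_face_flip {F' : Type*} {f : E → F} {g : E → F'}
    (hfg : ∀ e e', f e = f e' → g e = g e' → e = e') (b b' : EdgeBundle n)
    (hf : face f b = face f b') (hg : face g (flip b) = face g (flip b')) : b = b' := by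
  have hbase : base b = base b' := hfg _ _ (apply_base_eq_of_face_eq hf) <| by
    simpa only [base_flip] using apply_base_eq_of_face_eq hg
  have hposition : position b = position b' := position_eq_of_face_eq hbase hf
  have hposition_flip : position (flip b) = position (flip b') :=
    position_eq_of_face_eq (by simpa only [base_flip]) hg
  rcases b with ⟨e, t⟩ | ⟨e, t⟩ <;> rcases b' with ⟨e', t'⟩ | ⟨e', t'⟩ <;>
    obtain rfl : e = e' := hbase <;>
    simp only [flip_inl, flip_inr, position, Sum.elim_inl, Sum.elim_inr, Fin.val_rev] at * <;>
    grind

theorem isFaceLabelling {hd tl : E → R} {f : E → F} (h : IsFaceLabelling hd tl f)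
    (hd_ne_tl : ∀ e, hd e ≠ tl e) :
    IsFaceLabelling (vertex (n := n) hd tl) (vertex tl hd) (face f) where
  eq_of_hd := eq_of_vertex_of_face hd_ne_tl h.eq_of_hd
  eq_of_tl := eq_of_vertex_of_face (fun e => (hd_ne_tl e).symm) h.eq_of_tl
  exists_next b := by
    induction b using forward_backward_cases with
    | last e =>
      obtain ⟨e', hv, hf⟩ := h.exists_next e
      exact ⟨.inl ⟨e', Fin.last _⟩, hv, by rw [face_inl_last, face_inl_last, hf]⟩
    | castSucc e t => exact ⟨.inr ⟨e, t⟩, rfl, (face_inl_castSucc f e t).symm⟩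
    | backward e t => exact ⟨.inl ⟨e, t.castSucc⟩, rfl, face_inl_castSucc f e t⟩
  surjective := by
    rintro (c | p)
    · obtain ⟨e, rfl⟩ := h.surjective c
      exact ⟨_, face_inl_last f e⟩
    · exact ⟨_, face_inr f p⟩

end EdgeBundle

namespace SphericalDigraph

variable {R C S E : Type} [Fintype R] [Fintype C] [Fintype S] [Fintype E]

open EdgeBundle

theorem connected_edgeBundle (M : SphericalDigraph R C S E) {n : E → ℕ} (P : EdgeBundle n → Prop)
    (hP : ∀ b b', vertex M.hd M.tl b' = vertex M.tl M.hd b →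
      (face M.lf b' = face M.lf b ∨ face M.rt (flip b') = face M.rt (flip b)) → (P b ↔ P b'))
    (b b' : EdgeBundle n) (hb : P b) : P b' := by
  have digon_left (e) (t : Fin (n e)) : P (.inl ⟨e, t.castSucc⟩) ↔ P (.inr ⟨e, t⟩) :=
    hP _ _ rfl (.inl (face_inl_castSucc M.lf e t).symm)
  have digon_right (e) (t : Fin (n e)) : P (.inl ⟨e, t.succ⟩) ↔ P (.inr ⟨e, t⟩) :=
    hP _ _ rfl (.inr (by simp [Fin.rev_succ]))
  have forward_iff (e) (t : Fin (n e + 1)) : P (.inl ⟨e, t⟩) ↔ P (.inl ⟨e, 0⟩) := by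
    induction t using Fin.induction with
    | zero => rfl
    | succ t ih => rw [digon_right, ← digon_left, ih]
  have iff_base (b : EdgeBundle n) : P b ↔ P (.inl ⟨base b, 0⟩) := by
    rcases b with ⟨e, t⟩ | ⟨e, t⟩
    · exact forward_iff e t
    · rw [← digon_left, forward_iff]; rfl
  rw [iff_base] at hb ⊢
  refine M.connected (fun e => P (.inl ⟨e, 0⟩)) (fun e e' hv hf => ?_) _ _ hb
  rcases hf with hl | hr
  · rw [← forward_iff e (Fin.last _), ← forward_iff e' (Fin.last _)]
    exact hP _ _ hv (.inl (by rw [face_inl_last, face_inl_last, hl]))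
  · exact hP _ _ hv (.inr (by simp [hr]))

/-- The digraph in which each edge `e` is replaced by a bundle of `2 * n e + 1` parallel edges of
alternating direction, so that the alternation around the vertices is kept. -/
def expand (M : SphericalDigraph R C S E) (n : E → ℕ) :
    SphericalDigraph R (C ⊕ Σ e, Fin (n e)) (S ⊕ Σ e, Fin (n e)) (EdgeBundle n) where
  hd := vertex M.hd M.tl
  tl := vertex M.tl M.hd
  lf := face M.lf
  rt := face M.rt ∘ flip
  hd_ne_tl
    | .inl p => M.hd_ne_tl p.1
    | .inr p => (M.hd_ne_tl p.1).symm
  hd_surjective r := by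
    obtain ⟨e, rfl⟩ := M.hd_surjective r
    exact ⟨.inl ⟨e, 0⟩, rfl⟩
  left := isFaceLabelling M.left M.hd_ne_tl
  right := (isFaceLabelling M.right M.hd_ne_tl).comp_perm flip (vertex_flip _ _) (vertex_flip _ _)
  eq_of_faces := eq_of_face_of_face_flip M.eq_of_faces
  connected := M.connected_edgeBundle
  euler := by
    have := M.euler
    simp only [Fintype.card_sum, Fintype.card_sigma, Fintype.card_fin, Finset.sum_add_distrib,
      Finset.sum_const, Finset.card_univ, smul_eq_mul, mul_one]
    omega

end SphericalDigraph

namespace EdgeBundle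

variable {E F A : Type*} [AddCommGroup A] {n : E → ℕ}

theorem sum_apply_face (f : E → F) (g : F ⊕ (Σ e, Fin (n e)) → A) (e : E) :
    ∑ t, g (face f (.inl ⟨e, t⟩)) = ∑ t, g (.inr ⟨e, t⟩) + g (.inl (f e)) := by
  simp [Fin.sum_univ_castSucc]

theorem sum_apply_face_flip (f : E → F) (g : F ⊕ (Σ e, Fin (n e)) → A) (e : E) :
    ∑ t, g (face f (flip (.inl ⟨e, t⟩))) = ∑ t, g (.inr ⟨e, t⟩) + g (.inl (f e)) := by
  rw [← sum_apply_face]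
  exact Equiv.sum_comp Fin.revPerm fun t => g (face f (.inl ⟨e, t⟩))

/-- The extension to the digons of a function `g` on the left faces, or on the right faces, which
makes it grow by `d e` from each edge of the bundle of `e` to the next one of the same direction. -/
def extendFace (f : E → F) (g : F → A) (d : E → A) : F ⊕ (Σ e, Fin (n e)) → A :=
  Sum.elim g fun p => g (f p.1) + (p.2.castSucc.rev : ℕ) • d p.1

theorem extendFace_face (f : E → F) (g : F → A) (d : E → A) (e : E) (t : Fin (n e + 1)) :
    extendFace f g d (face f (.inl ⟨e, t⟩)) = g (f e) + (t.rev : ℕ) • d e := by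
  induction t using Fin.lastCases with
  | last => simp [extendFace]
  | cast t => simp [extendFace]

end EdgeBundle

namespace SphericalDigraph.Labelling

open EdgeBundle

variable {R C S E : Type} [Fintype R] [Fintype C] [Fintype S] [Fintype E]
  {M : SphericalDigraph R C S E} {n : E → ℕ} {A : Type*} [AddCommGroup A]

/-- The labelling of the digraph `M` obtained by forgetting the digons of `M.expand n`. -/
def contract (L : (M.expand n).Labelling 0 A) : M.Labelling n A where
  row := L.row
  col c := L.col (.inl c)
  sym s := L.sym (.inl s)
  -- Every digon occurs once in `forward` and once in `backward`, so it cancels.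
  rel e := by
    have forward : ∑ t, (L.row (M.hd e) + L.col (face M.lf (.inl ⟨e, t⟩)) +
        L.sym (face M.rt (flip (.inl ⟨e, t⟩)))) = 0 :=
      Finset.sum_eq_zero fun t _ => by simpa [expand] using L.rel (.inl ⟨e, t⟩)
    have backward : ∑ t, (L.row (M.tl e) + L.col (.inr ⟨e, t⟩) + L.sym (.inr ⟨e, t.rev⟩)) = 0 :=
      Finset.sum_eq_zero fun t _ => by simpa [expand] using L.rel (.inr ⟨e, t⟩)
    have sum_rev : ∑ t : Fin (n e), L.sym (.inr ⟨e, t.rev⟩) = ∑ t, L.sym (.inr ⟨e, t⟩) :=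
      Equiv.sum_comp Fin.revPerm fun t => L.sym (.inr ⟨e, t⟩)
    simp only [Finset.sum_add_distrib, sum_apply_face, sum_apply_face_flip, sum_rev,
      Finset.sum_const, Finset.card_univ, Fintype.card_fin] at forward backward
    linear_combination (norm := module) forward - backward

/-- The extension of a labelling of `M` to the digons of `M.expand n`. -/
def extend (L : M.Labelling n A) : (M.expand n).Labelling 0 A where
  row := L.row
  col := extendFace M.lf L.col fun e => L.row (M.hd e) - L.row (M.tl e)
  sym := extendFace M.rt L.sym fun e => L.row (M.hd e) - L.row (M.tl e)
  rel := by
    rintro (⟨e, t⟩ | ⟨e, t⟩) <;> set d := L.row (M.hd e) - L.row (M.tl e) with hd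
    · have digon_sum : (t.rev : ℕ) • d + (t.rev.rev : ℕ) • d = n e • d := by
        rw [← add_nsmul]; congr 1; grind
      simp only [expand, Function.comp_apply, vertex_inl, flip_inl, extendFace_face,
        Pi.zero_apply, zero_smul]
      linear_combination (norm := module) L.rel e + digon_sum
    · have digon_sum : (t.castSucc.rev : ℕ) • d + (t.rev.castSucc.rev : ℕ) • d = (n e + 1) • d := by
        rw [← add_nsmul]; congr 1; grind
      simp only [expand, Function.comp_apply, vertex_inr, flip_inr, face_inr, extendFace,
        Sum.elim_inr, Pi.zero_apply, zero_smul]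
      linear_combination (norm := module) L.rel e + digon_sum + hd

theorem contract_extend (L : M.Labelling n A) : L.extend.contract = L := rfl

end SphericalDigraph.Labelling

namespace SphericalDigraph

variable {R C S E : Type} [Fintype R] [Fintype C] [Fintype S] [Fintype E]
  {M : SphericalDigraph R C S E} {n : E → ℕ} {A : Type*} [AddCommGroup A]

/-- The labelling of `M` by the generators of the group `A_W` of the bitrade of `M.expand n` that
correspond to the vertices and faces of `M`. -/
def bundleLabelling (M : SphericalDigraph R C S E) (n : E → ℕ) :
    M.Labelling n (groupAW (M.expand n).toBitrade) :=
  (M.expand n).universalLabelling.contract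

theorem exists_map_bundleLabelling_eq (L : M.Labelling n A) :
    ∃ f, (M.bundleLabelling n).map f = L := by
  obtain ⟨f, hf⟩ := exists_map_universalLabelling_eq L.extend
  refine ⟨f, ?_⟩
  rw [← L.contract_extend, ← hf]
  rfl

theorem eq_top_of_bundleLabelling_mem {K : AddSubgroup (groupAW (M.expand n).toBitrade)}
    (hrow : ∀ r, (M.bundleLabelling n).row r ∈ K) {c : C}
    (hc : (M.bundleLabelling n).col c ∈ K) : K = ⊤ :=
  eq_top_of_universalLabelling_mem hrow hc

end SphericalDigraph

/-! ### A doubled fan -/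

namespace Fan

variable {k : ℕ}

/-- The vertices of the fan: the hub and the `2 * k` vertices of the path. -/
inductive Vertex (k : ℕ) : Type
  | hub
  | x (i : Fin k)
  | y (i : Fin k)

/-- The left faces of the fan, and also its right faces, correspond to the edges of the closed walk
`hub → y (k - 1) ← x (k - 1) → y (k - 2) ← ⋯ → y 0 ← x 0 → hub` around the fan: `inl i` stands for
`x i → y i`, and `inr j` for the edge preceding `x j` in this list, or ending it at the hub. -/
abbrev Face (k : ℕ) : Type :=
  Fin k ⊕ Fin (k + 1)

/-- The edges of the fan: those of the closed walk around it, and two parallel spokes from the hub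
to each `x i` and from each `y i` to the hub. -/
inductive Edge (k : ℕ) : Type
  | rim (f : Face k)
  | inSpoke (b : Bool) (i : Fin k)
  | outSpoke (b : Bool) (i : Fin k)

open Vertex Edge

/-- The vertices of the fan as a sum type, for counting them. -/
def vertexEquiv : Unit ⊕ Fin k ⊕ Fin k ≃ Vertex k where
  toFun := Sum.elim (fun _ => hub) (Sum.elim x y)
  invFun
    | hub => .inl ()
    | x i => .inr (.inl i)
    | y i => .inr (.inr i)
  left_inv := by rintro (_ | _ | _) <;> rfl
  right_inv := by rintro (_ | _ | _) <;> rfl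

/-- The edges of the fan as a sum type, for counting them. -/
def edgeEquiv : Face k ⊕ Bool × Fin k ⊕ Bool × Fin k ≃ Edge k where
  toFun := Sum.elim rim (Sum.elim (fun p => inSpoke p.1 p.2) (fun p => outSpoke p.1 p.2))
  invFun
    | rim f => .inl f
    | inSpoke b i => .inr (.inl (b, i))
    | outSpoke b i => .inr (.inr (b, i))
  left_inv := by rintro (_ | _ | _) <;> rfl
  right_inv := by rintro (_ | _ | _) <;> rfl

instance : Fintype (Vertex k) := Fintype.ofEquiv _ vertexEquiv

instance : Fintype (Edge k) := Fintype.ofEquiv _ edgeEquiv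

/-- The initial vertex of the edge `f` of the closed walk. -/
def source : Face k → Vertex k :=
  Sum.elim x (Fin.lastCases (motive := fun _ => Vertex k) hub x)

/-- The final vertex of the edge `f` of the closed walk. -/
def target : Face k → Vertex k :=
  Sum.elim y (Fin.cases (motive := fun _ => Vertex k) hub y)

/-- The two faces at `x i`. -/
def inFace : Bool → Fin k → Face k
  | true, i => .inl i
  | false, i => .inr i.castSucc

/-- The two faces at `y i`. -/
def outFace : Bool → Fin k → Face k
  | true, i => .inl i
  | false, i => .inr i.succ

/-- The head of an edge. -/
def head : Edge k → Vertex k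
  | rim f => target f
  | inSpoke _ i => x i
  | outSpoke _ _ => hub

/-- The tail of an edge. -/
def tail : Edge k → Vertex k
  | rim f => source f
  | inSpoke _ _ => hub
  | outSpoke _ i => y i

/-- The face to the left of an edge. -/
def leftFace : Edge k → Face k
  | rim f => f
  | inSpoke b i => inFace b i
  | outSpoke b i => outFace b i

/-- The exchange of parallel spokes; `leftFace ∘ swap` gives the right faces. -/
def swap : Equiv.Perm (Edge k) :=
  Function.Involutive.toPerm
    (fun
      | rim f => rim f
      | inSpoke b i => inSpoke (!b) i
      | outSpoke b i => outSpoke (!b) i)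
    (by rintro (_ | _ | _) <;> simp)

@[simp]
theorem swap_rim (f : Face k) : swap (rim f) = rim f := rfl

@[simp]
theorem swap_inSpoke (b : Bool) (i : Fin k) : swap (inSpoke b i) = inSpoke (!b) i := rfl

@[simp]
theorem swap_outSpoke (b : Bool) (i : Fin k) : swap (outSpoke b i) = outSpoke (!b) i := rfl

theorem source_inFace (b : Bool) (i : Fin k) : source (inFace b i) = x i := by
  cases b <;> simp [source, inFace]

theorem target_outFace (b : Bool) (i : Fin k) : target (outFace b i) = y i := by
  cases b <;> simp [target, outFace]

theorem source_cases (f : Face k) : (∃ b i, f = inFace b i) ∨ f = .inr (Fin.last k) := by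
  rcases f with i | j
  · exact .inl ⟨true, i, rfl⟩
  · induction j using Fin.lastCases with
    | last => exact .inr rfl
    | cast i => exact .inl ⟨false, i, rfl⟩

theorem target_cases (f : Face k) : (∃ b i, f = outFace b i) ∨ f = .inr 0 := by
  rcases f with i | j
  · exact .inl ⟨true, i, rfl⟩
  · induction j using Fin.cases with
    | zero => exact .inr rfl
    | succ i => exact .inl ⟨false, i, rfl⟩

theorem source_last : source (.inr (Fin.last k)) = hub := by simp [source]

theorem target_zero : target (.inr (0 : Fin (k + 1))) = hub := rfl

theorem source_ne_target [NeZero k] (f : Face k) : source f ≠ target f := by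
  rcases source_cases f with ⟨b, i, rfl⟩ | rfl
  · rw [source_inFace]
    rcases target_cases (inFace b i) with ⟨b', i', h⟩ | h
    · simp [h, target_outFace]
    · simp [h, target_zero]
  · obtain ⟨l, rfl⟩ := Nat.exists_eq_succ_of_ne_zero (NeZero.ne k)
    rw [source_last]
    exact nofun

theorem target_ne_x (f : Face k) (i : Fin k) : target f ≠ x i := by
  rcases target_cases f with ⟨b, i', rfl⟩ | rfl
  · simp [target_outFace]
  · simp [target_zero]

theorem source_ne_y (f : Face k) (i : Fin k) : source f ≠ y i := by
  rcases source_cases f with ⟨b, i', rfl⟩ | rfl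
  · simp [source_inFace]
  · simp [source_last]

theorem inFace_inj {b b' : Bool} {i i' : Fin k} :
    inFace b i = inFace b' i' ↔ b = b' ∧ i = i' := by
  cases b <;> cases b' <;> simp [inFace]

theorem outFace_inj {b b' : Bool} {i i' : Fin k} :
    outFace b i = outFace b' i' ↔ b = b' ∧ i = i' := by
  cases b <;> cases b' <;> simp [outFace]

theorem eq_of_head_eq_of_leftFace_eq (e e' : Edge k) (hv : head e = head e')
    (hf : leftFace e = leftFace e') : e = e' := by
  cases e <;> cases e' <;>
    grind [head, leftFace, inFace_inj, outFace_inj, target_outFace, target_ne_x]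

theorem eq_of_tail_eq_of_leftFace_eq (e e' : Edge k) (hv : tail e = tail e')
    (hf : leftFace e = leftFace e') : e = e' := by
  cases e <;> cases e' <;>
    grind [tail, leftFace, inFace_inj, outFace_inj, source_inFace, source_ne_y]

theorem eq_of_leftFace_eq_of_leftFace_swap_eq (e e' : Edge k) (hl : leftFace e = leftFace e')
    (hr : leftFace (swap e) = leftFace (swap e')) : e = e' := by
  have inFace_ne_outFace (b b' : Bool) (i i' : Fin k) (h : inFace b i = outFace b' i') :
      inFace (!b) i ≠ outFace (!b') i' := by
    cases b <;> cases b' <;> simp_all [inFace, outFace, Fin.ext_iff]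
  cases e <;> cases e' <;>
    grind [leftFace, swap_rim, swap_inSpoke, swap_outSpoke, inFace_inj, outFace_inj]

theorem isFaceLabelling [NeZero k] : IsFaceLabelling head tail (leftFace (k := k)) where
  eq_of_hd := eq_of_head_eq_of_leftFace_eq
  eq_of_tl := eq_of_tail_eq_of_leftFace_eq
  exists_next := by
    rintro (f | ⟨b, i⟩ | ⟨b, i⟩)
    · rcases source_cases f with ⟨b, i, rfl⟩ | rfl
      · exact ⟨inSpoke b i, (source_inFace b i).symm, rfl⟩
      · obtain ⟨b, i, h⟩ := (target_cases (.inr (Fin.last k))).resolve_right (by simp [NeZero.ne k])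
        exact ⟨outSpoke b i, source_last.symm, h.symm⟩
    · rcases target_cases (inFace b i) with ⟨b', i', h⟩ | h
      · exact ⟨outSpoke b' i', rfl, h.symm⟩
      · exact ⟨rim (.inr 0), target_zero, h.symm⟩
    · exact ⟨rim (outFace b i), target_outFace b i, rfl⟩
  surjective f := ⟨rim f, rfl⟩

theorem connected (P : Edge k → Prop)
    (hP : ∀ e e', head e' = tail e →
      (leftFace e' = leftFace e ∨ leftFace (swap e') = leftFace (swap e)) → (P e ↔ P e'))
    (e e' : Edge k) (he : P e) : P e' := by
  have out_iff (b b' : Bool) (i : Fin k) : P (outSpoke b i) ↔ P (rim (outFace b' i)) := by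
    refine hP _ _ (target_outFace b' i) ?_
    cases b <;> cases b' <;> first | exact .inl rfl | exact .inr rfl
  have in_iff (b b' : Bool) (i : Fin k) : P (rim (inFace b' i)) ↔ P (inSpoke b i) := by
    refine hP _ _ (source_inFace b' i).symm ?_
    cases b <;> cases b' <;> first | exact .inl rfl | exact .inr rfl
  have inl_iff_succ (i : Fin k) : P (rim (.inl i)) ↔ P (rim (.inr i.succ)) :=
    (out_iff true true i).symm.trans (out_iff true false i)
  have inl_iff_castSucc (i : Fin k) : P (rim (.inl i)) ↔ P (rim (.inr i.castSucc)) :=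
    (in_iff true true i).trans (in_iff true false i).symm
  have inr_iff (j : Fin (k + 1)) : P (rim (.inr j)) ↔ P (rim (.inr 0)) := by
    induction j using Fin.induction with
    | zero => rfl
    | succ i ih => rw [← inl_iff_succ, inl_iff_castSucc, ih]
  have iff_zero : ∀ e, P e ↔ P (rim (.inr 0))
    | rim (.inl i) => (inl_iff_succ i).trans (inr_iff _)
    | rim (.inr j) => inr_iff j
    | inSpoke b i => (in_iff b false i).symm.trans (inr_iff _)
    | outSpoke b i => (out_iff b false i).trans (inr_iff _)
  exact (iff_zero e').2 ((iff_zero e).1 he)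

/-- The fan as a spherical digraph. -/
def digraph (k : ℕ) [NeZero k] : SphericalDigraph (Vertex k) (Face k) (Face k) (Edge k) where
  hd := head
  tl := tail
  lf := leftFace
  rt := leftFace ∘ swap
  hd_ne_tl
    | rim f => (source_ne_target f).symm
    | inSpoke _ _ => nofun
    | outSpoke _ _ => nofun
  hd_surjective
    | hub => ⟨outSpoke true 0, rfl⟩
    | x i => ⟨inSpoke true i, rfl⟩
    | y i => ⟨rim (.inl i), rfl⟩
  left := isFaceLabelling
  right := isFaceLabelling.comp_perm swap (by rintro (_ | _ | _) <;> rfl)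
    (by rintro (_ | _ | _) <;> rfl)
  eq_of_faces := eq_of_leftFace_eq_of_leftFace_swap_eq
  connected := connected
  euler := by
    rw [← Fintype.card_congr vertexEquiv, ← Fintype.card_congr edgeEquiv]
    simp only [Fintype.card_sum, Fintype.card_unique, Fintype.card_fin, Fintype.card_prod,
      Fintype.card_bool]
    omega

end Fan

section PiZMod

variable {ι A : Type*} [Finite ι] [DecidableEq ι] [AddCommGroup A] {n : ι → ℕ}

theorem exists_addMonoidHom_pi_zmod_single {z : ι → A} (hz : ∀ i, n i • z i = 0) :
    ∃ φ : (∀ i, ZMod (n i)) →+ A, ∀ i, φ (Pi.single i 1) = z i := by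
  cases nonempty_fintype ι
  let lift (i : ι) : ZMod (n i) →+ A :=
    ZMod.lift (n i) ⟨zmultiplesHom A (z i), by simpa using hz i⟩
  have lift_one (i : ι) : lift i 1 = z i := by
    simpa [lift] using ZMod.lift_coe (n i) ⟨zmultiplesHom A (z i), by simpa using hz i⟩ 1
  refine ⟨∑ i, (lift i).comp (Pi.evalAddMonoidHom _ i), fun i => ?_⟩
  rw [AddMonoidHom.finsetSum_apply, Finset.sum_eq_single i]
  · simp [lift_one]
  · intro j _ hj
    simp [hj]
  · simp

theorem pi_zmod_addMonoidHom_ext {f g : (∀ i, ZMod (n i)) →+ A}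
    (h : ∀ i, f (Pi.single i 1) = g (Pi.single i 1)) : f = g := by
  refine AddMonoidHom.functions_ext' A f g fun i => ?_
  rw [← AddMonoidHom.cancel_right (f := Int.castAddHom (ZMod (n i))) ZMod.intCast_surjective]
  ext
  simpa using h i

end PiZMod

section Torsion

variable {A F G : Type*} [AddCommGroup A] [AddCommGroup F] [AddCommGroup G] [IsAddTorsionFree F]

theorem torsion_prod_eq_bot_prod_top (hG : IsAddTorsion G) :
    AddCommGroup.torsion (F × G) = (⊥ : AddSubgroup F).prod ⊤ := by
  rw [AddCommGroup.torsion_sum, AddCommGroup.isAddTorsionFree_iff_torsion_eq_bot.1 ‹_›,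
    AddCommGroup.torsion_eq_top_iff.2 hG]

/-- The torsion subgroup of a group that splits into a torsion-free group and a torsion group. -/
noncomputable def torsionEquivOfProd (hG : IsAddTorsion G) (e : A ≃+ F × G) :
    AddCommGroup.torsion A ≃+ G :=
  ((e.addSubgroupMap _).trans (AddEquiv.addSubgroupCongr
    (e.map_torsion.trans (torsion_prod_eq_bot_prod_top hG)))).trans
  ((AddSubgroup.prodEquiv _ _).trans (AddEquiv.uniqueProd.trans AddSubgroup.topEquiv))

end Torsion

/-! ### The group of the doubled fan -/

namespace Fan

open Vertex Edge SphericalDigraph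

variable {k m : ℕ} {a : Fin k → ℕ} {A B : Type*} [AddCommGroup A] [AddCommGroup B]

/-- The number of backward edges in the bundle replacing an edge of the fan.  The relation of the
unreplaced parallel spoke and that of the path raise the resulting coefficients to `m + 2` and
`a i + 2`. -/
def weight (m : ℕ) (a : Fin k → ℕ) : Edge k → ℕ
  | inSpoke true _ => m
  | outSpoke true i => a i
  | _ => 0

/-- The group `A_W` of the fan bitrade. -/
abbrev Model (m : ℕ) (a : Fin k → ℕ) : Type :=
  (ℤ × ℤ) × ∀ i, ZMod ((m + 2) * (a i + 2))

theorem model_addMonoidHom_ext {f g : Model m a →+ A}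
    (hhub : f ((1, 0), 0) = g ((1, 0), 0)) (hcol : f ((0, 1), 0) = g ((0, 1), 0))
    (hgen : ∀ i, f (0, Pi.single i 1) = g (0, Pi.single i 1)) : f = g := by
  have rank_eq : f.comp (.inl (ℤ × ℤ) _) = g.comp (.inl (ℤ × ℤ) _) := by
    rw [← (f.comp _).coprod_unique, ← (g.comp _).coprod_unique]
    congr 1 <;> ext <;> assumption
  rw [← f.coprod_unique, ← g.coprod_unique, rank_eq,
    pi_zmod_addMonoidHom_ext (f := f.comp (.inr _ _)) (g := g.comp (.inr _ _)) hgen]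

variable [NeZero k]

/-- The sequence `z 0 = 0`, `z (i + 1) = x i - hub - z i`; its terms from `z 1` on generate the
torsion. -/
def generatorSeq (L : (digraph k).Labelling (weight m a) A) : Fin (k + 1) → A :=
  Fin.induction 0 fun i w => L.row (x i) - L.row hub - w

theorem generatorSeq_zero (L : (digraph k).Labelling (weight m a) A) : generatorSeq L 0 = 0 := rfl

theorem generatorSeq_succ (L : (digraph k).Labelling (weight m a) A) (i : Fin k) :
    generatorSeq L i.succ = L.row (x i) - L.row hub - generatorSeq L i.castSucc := rfl

theorem generatorSeq_map (L : (digraph k).Labelling (weight m a) A) (f : A →+ B) (j : Fin (k + 1)) :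
    generatorSeq (L.map f) j = f (generatorSeq L j) := by
  induction j using Fin.induction with
  | zero => simp [generatorSeq_zero]
  | succ i ih => simp [generatorSeq_succ, ih]

theorem row_x_sub_hub (L : (digraph k).Labelling (weight m a) A) (i : Fin k) :
    (m + 2) • (L.row (x i) - L.row hub) =
      (L.row (y i) - L.row hub) + (L.row (target (.inr i.castSucc)) - L.row hub) := by
  have rim_inl := L.rel (rim (.inl i))
  have rim_inr := L.rel (rim (.inr i.castSucc))
  have spoke := L.rel (inSpoke false i)
  have thick_spoke := L.rel (inSpoke true i)
  simp only [digraph, head, tail, leftFace, inFace, target, weight, Function.comp_apply, swap_rim,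
    swap_inSpoke, Bool.not_true, Bool.not_false, zero_smul, Sum.elim_inl] at *
  linear_combination (norm := module) thick_spoke + spoke - rim_inl - rim_inr

theorem row_y_sub_hub (L : (digraph k).Labelling (weight m a) A) (i : Fin k) :
    (a i + 2) • (L.row (y i) - L.row hub) = 0 := by
  have rim_inl := L.rel (rim (.inl i))
  have rim_inr := L.rel (rim (.inr i.succ))
  have spoke := L.rel (outSpoke false i)
  have thick_spoke := L.rel (outSpoke true i)
  simp only [digraph, head, tail, leftFace, outFace, target, weight, Function.comp_apply, swap_rim,
    swap_outSpoke, Bool.not_true, Bool.not_false, zero_smul, Sum.elim_inl, Sum.elim_inr,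
    Fin.cases_succ] at *
  linear_combination (norm := module) rim_inl + rim_inr - thick_spoke - spoke

theorem row_target_inr_sub_hub (L : (digraph k).Labelling (weight m a) A) (j : Fin (k + 1)) :
    L.row (target (.inr j)) - L.row hub = (m + 2) • generatorSeq L j := by
  induction j using Fin.induction with
  | zero => simp [generatorSeq_zero, target_zero]
  | succ i ih =>
    rw [generatorSeq_succ, smul_sub, ← ih, row_x_sub_hub, add_sub_cancel_right]
    rfl

theorem smul_generatorSeq_succ (L : (digraph k).Labelling (weight m a) A) (i : Fin k) :
    ((m + 2) * (a i + 2)) • generatorSeq L i.succ = 0 := by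
  rw [mul_comm, mul_smul, ← row_target_inr_sub_hub]
  exact row_y_sub_hub L i

theorem row_mem (L : (digraph k).Labelling (weight m a) A) {K : AddSubgroup A}
    (hhub : L.row hub ∈ K) (hgen : ∀ i, generatorSeq L (Fin.succ i) ∈ K) :
    ∀ v, L.row v ∈ K
  | hub => hhub
  | x i => by
    have gen_mem (j : Fin (k + 1)) : generatorSeq L j ∈ K :=
      Fin.cases (generatorSeq_zero L ▸ K.zero_mem) hgen j
    rw [show L.row (x i) = L.row hub + (generatorSeq L i.succ + generatorSeq L i.castSucc) by
      rw [generatorSeq_succ]; abel]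
    exact K.add_mem hhub (K.add_mem (gen_mem _) (gen_mem _))
  | y i => by
    rw [← sub_add_cancel (L.row (y i)) (L.row hub)]
    exact K.add_mem (row_target_inr_sub_hub L i.succ ▸ K.nsmul_mem (hgen i) _) hhub

/-- The labelling with hub `h`, generators `z`, and `c` on the left face at which the closed walk
arrives at the hub.  On all faces it is determined by `σ`, a partial sum along the walk. -/
def ofGenerators (h c : A) (z : Fin k → A) (hz : ∀ i, ((m + 2) * (a i + 2)) • z i = 0) :
    (digraph k).Labelling (weight m a) A :=
  let Z : Fin (k + 1) → A := Fin.cons 0 z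
  let σ : Fin (k + 1) → A := Fin.partialSum fun i => Z i.succ + Z i.castSucc
  let row : Vertex k → A
    | hub => h
    | x i => h + (Z i.succ + Z i.castSucc)
    | y i => h + (m + 2) • Z i.succ
  { row := row
    col := Sum.elim (fun i => c + σ i.succ - (m + 2) • Z i.succ) fun j => c + σ j
    sym := Sum.elim (fun i => -(h + c + σ i.succ)) fun j => -(h + c + σ j + (m + 2) • Z j)
    rel := by
      have σ_succ (i : Fin k) : σ i.succ = σ i.castSucc + (Z i.succ + Z i.castSucc) :=
        Fin.partialSum_succ _ i
      have smul_Z_succ (i : Fin k) : (a i + 2) • (m + 2) • Z i.succ = 0 := by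
        rw [smul_smul, mul_comm]; exact hz i
      have row_target_inl (i : Fin k) : row (target (.inl i)) = h + (m + 2) • Z i.succ := rfl
      have row_target_inr : ∀ j, row (target (.inr j)) = h + (m + 2) • Z j :=
        Fin.cases (by simp [Z, row, target_zero]) fun _ => rfl
      rintro ((i | j) | ⟨_ | _, i⟩ | ⟨_ | _, i⟩) <;>
        simp only [digraph, head, tail, leftFace, inFace, outFace, weight, Function.comp_apply,
          swap_rim, swap_inSpoke, swap_outSpoke, Bool.not_true, Bool.not_false, zero_smul,
          Sum.elim_inl, Sum.elim_inr, row_target_inl, row_target_inr]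
      · module
      · module
      · linear_combination (norm := module) -σ_succ i
      · linear_combination (norm := module) σ_succ i
      · module
      · linear_combination (norm := module) -smul_Z_succ i }

theorem ofGenerators_row_hub {h c : A} {z : Fin k → A}
    (hz : ∀ i, ((m + 2) * (a i + 2)) • z i = 0) : (ofGenerators h c z hz).row hub = h := rfl

theorem ofGenerators_col_inr_zero {h c : A} {z : Fin k → A}
    (hz : ∀ i, ((m + 2) * (a i + 2)) • z i = 0) : (ofGenerators h c z hz).col (.inr 0) = c := by
  simp [ofGenerators]

theorem generatorSeq_ofGenerators {h c : A} {z : Fin k → A}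
    (hz : ∀ i, ((m + 2) * (a i + 2)) • z i = 0) (j : Fin (k + 1)) :
    generatorSeq (ofGenerators h c z hz) j = Fin.cons (α := fun _ => A) 0 z j := by
  induction j using Fin.induction with
  | zero => rfl
  | succ i ih =>
    rw [generatorSeq_succ, ih, ofGenerators_row_hub]
    simp [ofGenerators]

theorem exists_addMonoidHom_model (L : (digraph k).Labelling (weight m a) A) :
    ∃ φ : Model m a →+ A, φ ((1, 0), 0) = L.row hub ∧ φ ((0, 1), 0) = L.col (.inr 0) ∧
      ∀ i, φ (0, Pi.single i 1) = generatorSeq L i.succ := by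
  obtain ⟨ψ, hψ⟩ := exists_addMonoidHom_pi_zmod_single (smul_generatorSeq_succ L)
  exact ⟨(((zmultiplesHom A (L.row hub)).coprod (zmultiplesHom A (L.col (.inr 0)))).coprod ψ),
    by simp, by simp, fun i => by simp [hψ]⟩

theorem exists_labelling_model (m : ℕ) (a : Fin k → ℕ) :
    ∃ L : (digraph k).Labelling (weight m a) (Model m a), L.row hub = ((1, 0), 0) ∧
      L.col (.inr 0) = ((0, 1), 0) ∧ ∀ i, generatorSeq L i.succ = (0, Pi.single i 1) := by
  have hz (i : Fin k) : ((m + 2) * (a i + 2)) • ((0, Pi.single i 1) : Model m a) = 0 := by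
    rw [Prod.smul_mk, smul_zero, ← Pi.single_smul, nsmul_one, ZMod.natCast_self, Pi.single_zero]
    rfl
  exact ⟨ofGenerators _ _ _ hz, ofGenerators_row_hub hz, ofGenerators_col_inr_zero hz,
    fun i => by rw [generatorSeq_ofGenerators, Fin.cons_succ]⟩

theorem nonempty_groupAW_addEquiv_model (m : ℕ) (a : Fin k → ℕ) :
    Nonempty (groupAW ((digraph k).expand (weight m a)).toBitrade ≃+ Model m a) := by
  set L := (digraph k).bundleLabelling (weight m a)
  obtain ⟨φ, φ_hub, φ_col, φ_gen⟩ := exists_addMonoidHom_model L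
  obtain ⟨L', L'_hub, L'_col, L'_gen⟩ := exists_labelling_model m a
  obtain ⟨g, rfl⟩ : ∃ g, L.map g = L' := exists_map_bundleLabelling_eq L'
  have g_comp_φ : g.comp φ = AddMonoidHom.id _ := by
    refine model_addMonoidHom_ext ?_ ?_ fun i => ?_ <;> rw [AddMonoidHom.comp_apply]
    · rw [φ_hub]; exact L'_hub
    · rw [φ_col]; exact L'_col
    · rw [φ_gen, ← generatorSeq_map]; exact L'_gen i
  have φ_range : φ.range = ⊤ :=
    eq_top_of_bundleLabelling_mem (row_mem L ⟨_, φ_hub⟩ fun i => ⟨_, φ_gen i⟩) ⟨_, φ_col⟩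
  exact ⟨(AddEquiv.ofBijective φ ⟨Function.LeftInverse.injective (DFunLike.congr_fun g_comp_φ),
    AddMonoidHom.range_eq_top.1 φ_range⟩).symm⟩

end Fan

/-- For `k ≥ 1` and `m, a_1, …, a_k ≥ 2` there is a spherical latin bitrade whose canonical
group is isomorphic to `ℤ/(m·a_1) ⊕ ⋯ ⊕ ℤ/(m·a_k)`. -/
theorem exists_spherical_bitrade_canonical_group_composites_with_common_factor
    (k m : ℕ) (hk : 1 ≤ k) (hm : 2 ≤ m) (a : Fin k → ℕ) (ha : ∀ i, 2 ≤ a i) :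
    ∃ T : SphericalLatinBitrade,
      Nonempty (CanonicalGroup T ≃+ ((i : Fin k) → ZMod (m * a i))) := by
  have : NeZero k := ⟨Nat.one_le_iff_ne_zero.1 hk⟩
  obtain ⟨m, rfl⟩ := Nat.exists_eq_add_of_le' hm
  obtain ⟨a, rfl⟩ : ∃ b : Fin k → ℕ, a = fun i => b i + 2 :=
    ⟨fun i => a i - 2, funext fun i => (Nat.sub_add_cancel (ha i)).symm⟩
  obtain ⟨e⟩ := Fan.nonempty_groupAW_addEquiv_model m a
  exact ⟨((Fan.digraph k).expand (Fan.weight m a)).toBitrade,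
    ⟨torsionEquivOfProd isAddTorsion_of_finite e⟩⟩
end

section
/- Let k ≥ 1 and let n_1, n_2, …, n_k be composite integers (i.e. each n_i = b_i·c_i for some integers b_i, c_i ≥ 2). Then there exists a spherical latin bitrade whose canonical group is isomorphic to Z_{n_1} ⊕ Z_{n_2} ⊕ … ⊕ Z_{n_k}. -/
/-!
Pairing the two triples `(r, c, s) ∈ W` and `(r', c, s) ∈ B` of a spherical bitrade gives the arcs
`r ⟶ r'` of a plane digraph on the rows in which arcs alternately enter and leave around each
vertex; its faces are the columns and symbols. Conversely, every loopless plane alternating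
digraph gives a spherical bitrade, and `A_W` is generated by the vertices and faces subject to one
relation per arc.

Let `x` be the difference of the labels of the two ends of an arc, and suppose that a prime `p`
kills `x`. Inserting two vertices near that arc enlarges the group by one generator `g` with the
single relation `(m * k) • g = m • x`, for any `m, k ≥ 2`, and creates an arc whose difference is
killed by `m`. Now let `n` be composite. If `p ∣ n`, take `m = p`, so that `m • x = 0`; otherwise
take for `m` any prime factor of `n`, and `m • x` is a multiple of `n` because `n` is invertible
modulo `p`. In both cases `n • g = n • y` for some `y` of the old group, which therefore gains
`ZMod n` as a direct summand, spanned by `g - y`, and `m` takes the place of `p` for the new arc.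
The starting point is a single loop, with group `ℤ × ℤ` and `x = 0`.
-/

/-! ### Plane alternating digraphs and vertex insertion -/

/-- Incidence of the arcs `tail e ⟶ head e` of a plane alternating digraph with the faces `face e`
on one fixed side of them: at every vertex, each face has as many corners as it has arcs leaving
that vertex, namely at most one, and in each such corner some arc enters the vertex. -/
structure HasCorners {E R F : Type*} (tail head : E → R) (face : E → F) : Prop where
  injective_tail_face : Function.Injective fun e ↦ (tail e, face e)
  exists_pred : ∀ e, ∃ f, head f = tail e ∧ face f = face e

namespace HasCorners

variable {E R F : Type*} {tail head : E → R} {face : E → F}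

lemma exists_perm [Finite E] (h : HasCorners tail head face) :
    ∃ π : Equiv.Perm E, ∀ e, head (π e) = tail e ∧ face (π e) = face e := by
  choose pred head_pred face_pred using h.exists_pred
  have pred_injective : Function.Injective pred := fun e e' he ↦ h.injective_tail_face <|
    Prod.ext ((head_pred e).symm.trans (he ▸ head_pred e'))
      ((face_pred e).symm.trans (he ▸ face_pred e'))
  exact ⟨.ofBijective pred (Finite.injective_iff_bijective.1 pred_injective),
    fun e ↦ ⟨head_pred e, face_pred e⟩⟩

lemma reverse [Finite E] (h : HasCorners tail head face) : HasCorners head tail face := by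
  obtain ⟨π, hπ⟩ := h.exists_perm
  refine ⟨fun e e' he ↦ ?_, fun e ↦ ⟨π.symm e, ?_, ?_⟩⟩
  · obtain ⟨⟨e, rfl⟩, ⟨e', rfl⟩⟩ := And.intro (π.surjective e) (π.surjective e')
    simp only [hπ] at he
    rw [h.injective_tail_face he]
  · simpa using (hπ (π.symm e)).1.symm
  · simpa using (hπ (π.symm e)).2.symm

lemma injective_head_face [Finite E] (h : HasCorners tail head face) :
    Function.Injective fun e ↦ (head e, face e) :=
  h.reverse.injective_tail_face

end HasCorners

/-- The arcs `f` and `e` follow each other around a face. -/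
def Consecutive {E R C S : Type*} (tail head : E → R) (col : E → C) (sym : E → S) (f e : E) :
    Prop :=
  head f = tail e ∧ (col f = col e ∨ sym f = sym e)

/-- A connected plane digraph whose arcs alternately enter and leave around each vertex, with
vertex set `R` and arc set `E`. Each face is then bounded by a directed cycle; the faces on the
left of their arcs form `C`, those on the right form `S`, and planarity is encoded by Euler's
formula. The arc `e` stands for the pair of triples `(tail e, col e, sym e)` and
`(head e, col e, sym e)` of a bitrade. -/
structure AlternatingDigraph (R C S E : Type) [Fintype R] [Fintype C] [Fintype S]
    [Fintype E] where
  tail : E → R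
  head : E → R
  col : E → C
  sym : E → S
  injective_col_sym : Function.Injective fun e ↦ (col e, sym e)
  hasCorners_col : HasCorners tail head col
  hasCorners_sym : HasCorners tail head sym
  surjective_tail : Function.Surjective tail
  surjective_col : Function.Surjective col
  surjective_sym : Function.Surjective sym
  eqvGen_consecutive : ∀ e f, Relation.EqvGen (Consecutive tail head col sym) e f
  euler : Fintype.card R + Fintype.card C + Fintype.card S = Fintype.card E + 2

namespace AlternatingDigraph

section Reverse

variable {R C S E : Type} [Fintype R] [Fintype C] [Fintype S] [Fintype E]

lemma surjective_head (M : AlternatingDigraph R C S E) : Function.Surjective M.head := fun r ↦ by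
  obtain ⟨e, rfl⟩ := M.surjective_tail r
  obtain ⟨f, hf, -⟩ := M.hasCorners_col.exists_pred e
  exact ⟨f, hf⟩

/-- The digraph with all arcs reversed. -/
def reverse (M : AlternatingDigraph R C S E) : AlternatingDigraph R C S E where
  tail := M.head
  head := M.tail
  col := M.col
  sym := M.sym
  injective_col_sym := M.injective_col_sym
  hasCorners_col := M.hasCorners_col.reverse
  hasCorners_sym := M.hasCorners_sym.reverse
  surjective_tail := M.surjective_head
  surjective_col := M.surjective_col
  surjective_sym := M.surjective_sym
  eqvGen_consecutive e f := by
    refine (M.eqvGen_consecutive e f).rec (fun e f h ↦ ?_) .refl (fun _ _ _ ↦ .symm _ _)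
      (fun _ _ _ _ _ ↦ .trans _ _ _)
    exact .symm _ _ (.rel _ _ ⟨h.1.symm, h.2.imp Eq.symm Eq.symm⟩)
  euler := M.euler

/-- Without loops. -/
def Loopless (M : AlternatingDigraph R C S E) : Prop := ∀ e, M.tail e ≠ M.head e

end Reverse

/-- The one-vertex digraph with a single loop. -/
def loop : AlternatingDigraph Unit Unit Unit Unit where
  tail := id
  head := id
  col := id
  sym := id
  injective_col_sym _ _ _ := rfl
  hasCorners_col := ⟨fun _ _ _ ↦ rfl, fun e ↦ ⟨e, rfl, rfl⟩⟩
  hasCorners_sym := ⟨fun _ _ _ ↦ rfl, fun e ↦ ⟨e, rfl, rfl⟩⟩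
  surjective_tail := Function.surjective_id
  surjective_col := Function.surjective_id
  surjective_sym := Function.surjective_id
  eqvGen_consecutive e _ := .refl e
  euler := rfl

end AlternatingDigraph

section Insertion

variable {E R F I J : Type*}

/-- The tails of the arcs after inserting a new vertex `none` on the arc `e₀` and joining it to the
head of `e₀` by new arcs, those in `I` leaving and those in `J` entering the new vertex. -/
def insertTail (tail head : E → R) (e₀ : E) : E ⊕ I ⊕ J → Option R :=
  Sum.elim (some ∘ tail) (Sum.elim (fun _ ↦ none) fun _ ↦ some (head e₀))

open Classical in
/-- The heads of the arcs, in the situation of `insertTail`. -/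
noncomputable def insertHead (head : E → R) (e₀ : E) : E ⊕ I ⊕ J → Option R :=
  Sum.elim (Function.update (some ∘ head) e₀ none)
    (Sum.elim (fun _ ↦ some (head e₀)) fun _ ↦ none)

/-- The faces on one side of the arcs, in the situation of `insertTail`: each arc `j : J` is
followed around a new face `j` by the arc `q.symm (some j)`, and the arc `q.symm none` follows
`e₀` around its old face. -/
def insertFace (face : E → F) (e₀ : E) (q : I → Option J) : E ⊕ I ⊕ J → F ⊕ J :=
  Sum.elim (.inl ∘ face) (Sum.elim (fun i ↦ (q i).elim (.inl (face e₀)) .inr) .inr)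

lemma HasCorners.insert {tail head : E → R} {face : E → F} (h : HasCorners tail head face)
    (e₀ : E) (q : I ≃ Option J) :
    HasCorners (insertTail tail head e₀) (insertHead head e₀) (insertFace face e₀ q) where
  injective_tail_face := by
    rintro (e | i | j) (e' | i' | j') he <;>
      simp only [insertTail, insertFace, Sum.elim_inl, Sum.elim_inr, Function.comp_apply,
        Prod.mk.injEq, reduceCtorEq, false_and, and_false, Option.some.injEq, Sum.inl.injEq,
        Sum.inr.injEq, true_and] at he
    · rw [h.injective_tail_face (Prod.ext he.1 he.2)]
    · rw [q.injective (a₁ := i) (a₂ := i') ?_]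
      cases hi : q i <;> cases hi' : q i' <;> simp_all
    · rw [he]
  exists_pred := by
    rintro (e | i | j)
    · obtain ⟨f, head_f, face_f⟩ := h.exists_pred e
      by_cases hf : f = e₀
      · subst hf
        exact ⟨.inr (.inl (q.symm none)), by simp [insertTail, insertHead, insertFace, *]⟩
      · exact ⟨.inl f, by simp [insertTail, insertHead, insertFace, *]⟩
    · cases hi : q i with
      | none => exact ⟨.inl e₀, by simp [insertTail, insertHead, insertFace, hi]⟩
      | some j => exact ⟨.inr (.inr j), by simp [insertTail, insertHead, insertFace, hi]⟩
    · exact ⟨.inr (.inl (q.symm (some j))), by simp [insertTail, insertHead, insertFace]⟩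

lemma injective_insertFace_insertFace {C S : Type*} {col : E → C} {sym : E → S} (e₀ : E)
    {p q : I → Option J} (h : Function.Injective fun e ↦ (col e, sym e))
    (hp : Function.Injective p) (hpq : ∀ i, p i ≠ q i) :
    Function.Injective fun e ↦ (insertFace col e₀ p e, insertFace sym e₀ q e) := by
  have ne_old (e i) : (insertFace col e₀ p (.inr (.inl i)), insertFace sym e₀ q (.inr (.inl i))) ≠
      (.inl (col e), .inl (sym e)) := fun he ↦ hpq i <| by
    cases hp : p i <;> cases hq : q i <;> simp_all [insertFace]
  have ne_new (j i) : (insertFace col e₀ p (.inr (.inl i)), insertFace sym e₀ q (.inr (.inl i))) ≠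
      (.inr j, .inr j) := fun he ↦ hpq i <| by
    cases hp : p i <;> cases hq : q i <;> simp_all [insertFace]
  rintro (e | i | j) (e' | i' | j') he
  · exact congrArg Sum.inl (h (by simpa [insertFace] using he))
  · exact (ne_old e i' he.symm).elim
  · simp [insertFace] at he
  · exact (ne_old e' i he).elim
  · rw [hp (a₁ := i) (a₂ := i') ?_]
    cases hi : p i <;> cases hi' : p i' <;> simp_all [insertFace]
  · exact (ne_new j' i he).elim
  · simp [insertFace] at he
  · exact (ne_new j i' he.symm).elim
  · rw [show j = j' by simpa [insertFace] using he]

lemma surjective_insertFace {face : E → F} (e₀ : E) (q : I → Option J)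
    (h : Function.Surjective face) : Function.Surjective (insertFace face e₀ q) := by
  rintro (r | j)
  · obtain ⟨e, rfl⟩ := h r
    exact ⟨.inl e, rfl⟩
  · exact ⟨.inr (.inr j), rfl⟩

lemma finSuccEquiv_ne_finSuccEquivLast {N : ℕ} [NeZero N] (i : Fin (N + 1)) :
    finSuccEquiv N i ≠ finSuccEquivLast i := by
  induction i using Fin.lastCases with
  | last => simpa using (Fin.last_pos' (n := N)).ne'
  | cast j =>
    rw [finSuccEquivLast_castSucc, Ne, finSuccEquiv_eq_some]
    exact (Fin.castSucc_lt_succ).ne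

end Insertion

namespace AlternatingDigraph

variable {R C S E : Type} [Fintype R] [Fintype C] [Fintype S] [Fintype E]

section Insert

variable (M : AlternatingDigraph R C S E) (e₀ : E) (N : ℕ)

lemma eqvGen_consecutive_insert (e : E ⊕ Fin (N + 1) ⊕ Fin N) :
    Relation.EqvGen
      (Consecutive (insertTail M.tail M.head e₀) (insertHead M.head e₀)
        (insertFace M.col e₀ (finSuccEquiv N)) (insertFace M.sym e₀ finSuccEquivLast))
      (.inl e₀) e := by
  set rel := Consecutive (insertTail M.tail M.head e₀) (insertHead M.head e₀)
    (insertFace M.col e₀ (finSuccEquiv N)) (insertFace M.sym e₀ finSuccEquivLast)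
  have root_zero : Relation.EqvGen rel (.inl e₀) (.inr (.inl 0)) :=
    .rel _ _ ⟨by simp [insertTail, insertHead], .inl (by simp [insertFace])⟩
  have root_last : Relation.EqvGen rel (.inl e₀) (.inr (.inl (Fin.last N))) :=
    .rel _ _ ⟨by simp [insertTail, insertHead], .inr (by simp [insertFace])⟩
  have back_castSucc (j : Fin N) :
      Relation.EqvGen rel (.inr (.inr j)) (.inr (.inl j.castSucc)) :=
    .rel _ _ ⟨by simp [insertTail, insertHead], .inr (by simp [insertFace])⟩
  have back_succ (j : Fin N) : Relation.EqvGen rel (.inr (.inr j)) (.inr (.inl j.succ)) :=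
    .rel _ _ ⟨by simp [insertTail, insertHead], .inl (by simp [insertFace])⟩
  have root_out (i : Fin (N + 1)) : Relation.EqvGen rel (.inl e₀) (.inr (.inl i)) := by
    induction i using Fin.induction with
    | zero => exact root_zero
    | succ j ih => exact (ih.trans _ _ _ (.symm _ _ (back_castSucc j))).trans _ _ _ (back_succ j)
  have old_consecutive (f e : E) (h : Consecutive M.tail M.head M.col M.sym f e) :
      Relation.EqvGen rel (.inl f) (.inl e) := by
    by_cases hf : f = e₀
    · subst hf
      rcases h with ⟨head_f, face_f | face_f⟩
      · refine root_zero.trans _ _ _ (.rel _ _ ⟨?_, .inl ?_⟩) <;>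
          simp [insertTail, insertHead, insertFace, *]
      · refine root_last.trans _ _ _ (.rel _ _ ⟨?_, .inr ?_⟩) <;>
          simp [insertTail, insertHead, insertFace, *]
    · exact .rel _ _ ⟨by simp [insertTail, insertHead, hf, h.1],
        h.2.imp (by simp [insertFace, ·]) (by simp [insertFace, ·])⟩
  rcases e with e | i | j
  · exact (M.eqvGen_consecutive e₀ e).rec old_consecutive (fun _ ↦ .refl _)
      (fun _ _ _ ↦ .symm _ _) (fun _ _ _ _ _ ↦ .trans _ _ _)
  · exact root_out i
  · exact (root_out _).trans _ _ _ (.symm _ _ (back_castSucc j))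

variable [NeZero N]

/-- Insertion of a new vertex on the arc `e₀`, joined to the head of `e₀` by `N + 1` arcs leaving
the new vertex and `N` arcs entering it, alternately. -/
noncomputable def insert :
    AlternatingDigraph (Option R) (C ⊕ Fin N) (S ⊕ Fin N) (E ⊕ Fin (N + 1) ⊕ Fin N) where
  tail := insertTail M.tail M.head e₀
  head := insertHead M.head e₀
  col := insertFace M.col e₀ (finSuccEquiv N)
  sym := insertFace M.sym e₀ finSuccEquivLast
  injective_col_sym := injective_insertFace_insertFace e₀ M.injective_col_sym
    (finSuccEquiv N).injective finSuccEquiv_ne_finSuccEquivLast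
  hasCorners_col := M.hasCorners_col.insert e₀ (finSuccEquiv N)
  hasCorners_sym := M.hasCorners_sym.insert e₀ finSuccEquivLast
  surjective_tail := by
    rintro (_ | r)
    · exact ⟨.inr (.inl 0), rfl⟩
    · obtain ⟨e, rfl⟩ := M.surjective_tail r
      exact ⟨.inl e, rfl⟩
  surjective_col := surjective_insertFace e₀ _ M.surjective_col
  surjective_sym := surjective_insertFace e₀ _ M.surjective_sym
  eqvGen_consecutive e f :=
    .trans _ _ _ (.symm _ _ (M.eqvGen_consecutive_insert e₀ N e))
      (M.eqvGen_consecutive_insert e₀ N f)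
  euler := by
    have := M.euler
    simp only [Fintype.card_option, Fintype.card_sum, Fintype.card_fin]
    omega

lemma loopless_insert (h : ∀ e ≠ e₀, M.tail e ≠ M.head e) : (M.insert e₀ N).Loopless := by
  rintro (e | i | j)
  · by_cases he : e = e₀
    · simp [insert, insertTail, insertHead, he]
    · simpa [insert, insertTail, insertHead, he] using h e he
  · simp [insert, insertTail, insertHead]
  · simp [insert, insertTail, insertHead]

end Insert

/-! ### The spherical bitrade of an alternating digraph -/

section Bitrade

variable (M : AlternatingDigraph R C S E)

open Classical in
/-- The partial latin square of all triples (tail, left face, right face). -/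
noncomputable def triples : Finset (R × C × S) :=
  Finset.univ.image fun e ↦ (M.tail e, M.col e, M.sym e)

lemma mem_triples {x : R × C × S} : x ∈ M.triples ↔ ∃ e, (M.tail e, M.col e, M.sym e) = x := by
  simp [triples]

lemma triple_mem_triples (e : E) : (M.tail e, M.col e, M.sym e) ∈ M.triples :=
  M.mem_triples.2 ⟨e, rfl⟩

lemma card_triples : M.triples.card = Fintype.card E := by
  classical
  exact Finset.card_image_of_injective _ fun _ _ h ↦ M.injective_col_sym (congrArg Prod.snd h)

lemma isPartialLatinSquare_triples : IsPartialLatinSquare M.triples := by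
  refine ⟨?_, fun r ↦ ?_, fun c ↦ ?_, fun s ↦ ?_⟩
  · simp only [mem_triples]
    rintro _ ⟨e, rfl⟩ _ ⟨f, rfl⟩ hne
    refine ⟨fun h ↦ hne ?_, fun h ↦ hne ?_, fun h ↦ hne ?_⟩
    · rw [M.hasCorners_col.injective_tail_face (Prod.ext h.1 h.2)]
    · rw [M.hasCorners_sym.injective_tail_face (Prod.ext h.1 h.2)]
    · rw [M.injective_col_sym (Prod.ext h.1 h.2)]
  · obtain ⟨e, rfl⟩ := M.surjective_tail r
    exact ⟨_, M.triple_mem_triples e, rfl⟩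
  · obtain ⟨e, rfl⟩ := M.surjective_col c
    exact ⟨_, M.triple_mem_triples e, rfl⟩
  · obtain ⟨e, rfl⟩ := M.surjective_sym s
    exact ⟨_, M.triple_mem_triples e, rfl⟩

variable {M}

lemma eq_head_of_mem_triples_reverse {r : R} {e : E}
    (h : (r, M.col e, M.sym e) ∈ M.reverse.triples) : r = M.head e := by
  obtain ⟨f, hf⟩ := M.reverse.mem_triples.1 h
  obtain rfl : f = e := M.injective_col_sym (congrArg Prod.snd hf)
  exact congrArg Prod.fst hf.symm

lemma eq_col_of_mem_triples_reverse {c : C} {e f : E} (head_f : M.head f = M.tail e)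
    (sym_f : M.sym f = M.sym e) (h : (M.tail e, c, M.sym e) ∈ M.reverse.triples) :
    c = M.col f := by
  obtain ⟨f', hf'⟩ := M.reverse.mem_triples.1 h
  obtain ⟨head_f', rfl, sym_f'⟩ := by simpa using hf'
  rw [← M.hasCorners_sym.injective_head_face
    (Prod.ext (head_f'.trans head_f.symm) (sym_f'.trans sym_f.symm))]
  rfl

lemma eq_sym_of_mem_triples_reverse {s : S} {e f : E} (head_f : M.head f = M.tail e)
    (col_f : M.col f = M.col e) (h : (M.tail e, M.col e, s) ∈ M.reverse.triples) :
    s = M.sym f := by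
  obtain ⟨f', hf'⟩ := M.reverse.mem_triples.1 h
  obtain ⟨head_f', col_f', rfl⟩ := by simpa using hf'
  rw [← M.hasCorners_col.injective_head_face
    (Prod.ext (head_f'.trans head_f.symm) (col_f'.trans col_f.symm))]
  rfl

lemma tradeCond_triples (h : M.Loopless) : TradeCond M.triples M.reverse.triples := by
  intro x hx
  obtain ⟨e, rfl⟩ := M.mem_triples.1 hx
  refine ⟨⟨M.head e, ⟨(h e).symm, M.reverse.triple_mem_triples e⟩,
    fun r hr ↦ eq_head_of_mem_triples_reverse hr.2⟩, ?_, ?_⟩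
  · obtain ⟨f, head_f, sym_f⟩ := M.hasCorners_sym.exists_pred e
    refine ⟨M.col f, ⟨fun col_f ↦ ?_, ?_⟩,
      fun c hc ↦ eq_col_of_mem_triples_reverse head_f sym_f hc.2⟩
    · obtain rfl : f = e := M.injective_col_sym (Prod.ext col_f sym_f)
      exact h f head_f.symm
    · rw [← head_f, ← sym_f]
      exact M.reverse.triple_mem_triples f
  · obtain ⟨f, head_f, col_f⟩ := M.hasCorners_col.exists_pred e
    refine ⟨M.sym f, ⟨fun sym_f ↦ ?_, ?_⟩,
      fun s hs ↦ eq_sym_of_mem_triples_reverse head_f col_f hs.2⟩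
    · obtain rfl : f = e := M.injective_col_sym (Prod.ext col_f sym_f)
      exact h f head_f.symm
    · rw [← head_f, ← col_f]
      exact M.reverse.triple_mem_triples f

section Subtrade

variable {W B : Finset (R × C × S)} (hB : B ⊆ M.reverse.triples) (hWB : TradeCond W B)
include hB hWB

lemma head_triple_mem_of_tradeCond {e : E} (he : (M.tail e, M.col e, M.sym e) ∈ W) :
    (M.head e, M.col e, M.sym e) ∈ B := by
  obtain ⟨r, ⟨-, hr⟩, -⟩ := (hWB _ he).1
  rwa [eq_head_of_mem_triples_reverse (hB hr)] at hr

lemma pred_triple_mem_of_tradeCond {e f : E} (hfe : Consecutive M.tail M.head M.col M.sym f e)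
    (he : (M.tail e, M.col e, M.sym e) ∈ W) : (M.head f, M.col f, M.sym f) ∈ B := by
  obtain ⟨-, ⟨c, ⟨-, hc⟩, -⟩, ⟨s, ⟨-, hs⟩, -⟩⟩ := hWB _ he
  rcases hfe with ⟨head_f, col_f | sym_f⟩
  · rwa [eq_sym_of_mem_triples_reverse head_f col_f (hB hs), ← col_f, ← head_f] at hs
  · rwa [eq_col_of_mem_triples_reverse head_f sym_f (hB hc), ← sym_f, ← head_f] at hc

end Subtrade

lemma not_exists_subtrade :
    ¬ ∃ W B : Finset (R × C × S), W ⊂ M.triples ∧ B ⊂ M.reverse.triples ∧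
      W.Nonempty ∧ B.Nonempty ∧ TradeCond W B ∧ TradeCond B W := by
  rintro ⟨W, B, hW, hB, ⟨x, hx⟩, -, hWB, hBW⟩
  let inW (e : E) : Prop := (M.tail e, M.col e, M.sym e) ∈ W
  have inW_iff_of_consecutive (f e : E) (h : Consecutive M.tail M.head M.col M.sym f e) :
      inW f ↔ inW e :=
    ⟨fun hf ↦ pred_triple_mem_of_tradeCond (M := M.reverse) hW.1 hBW
        ⟨h.1.symm, h.2.imp Eq.symm Eq.symm⟩ (head_triple_mem_of_tradeCond hB.1 hWB hf),
      fun he ↦ head_triple_mem_of_tradeCond (M := M.reverse) hW.1 hBW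
        (pred_triple_mem_of_tradeCond hB.1 hWB h he)⟩
  have inW_iff (f e : E) : inW f ↔ inW e :=
    (M.eqvGen_consecutive f e).rec inW_iff_of_consecutive (fun _ ↦ .rfl) (fun _ _ _ ↦ .symm)
      (fun _ _ _ _ _ ↦ .trans)
  obtain ⟨f, rfl⟩ := M.mem_triples.1 (hW.1 hx)
  refine hW.2 fun y hy ↦ ?_
  obtain ⟨e, rfl⟩ := M.mem_triples.1 hy
  exact (inW_iff f e).1 hx

/-- The spherical bitrade of a loopless alternating digraph, with the triples at the tails
against those at the heads. -/
noncomputable def bitrade [Nonempty E] (h : M.Loopless) : SphericalLatinBitrade where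
  R := R
  C := C
  S := S
  instR := inferInstance
  instC := inferInstance
  instS := inferInstance
  W := M.triples
  B := M.reverse.triples
  W_nonempty := ⟨_, M.triple_mem_triples (Classical.arbitrary E)⟩
  B_nonempty := ⟨_, M.reverse.triple_mem_triples (Classical.arbitrary E)⟩
  W_pls := M.isPartialLatinSquare_triples
  B_pls := M.reverse.isPartialLatinSquare_triples
  tradeWB := tradeCond_triples h
  tradeBW := tradeCond_triples (M := M.reverse) fun e ↦ (h e).symm
  connected := not_exists_subtrade
  spherical := by rw [M.card_triples, M.euler]

end Bitrade

end AlternatingDigraph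

/-! ### Labellings and their behaviour under insertion -/

section ZeroSum

variable {E C S X : Type*} [AddCommGroup X] {N : ℕ}

lemma forall_add_eq_zero_iff_partialSum {a b : Fin (N + 1) → X} {p : X} {q : Fin N → X} :
    ((∀ i, p + a i + b i = 0) ∧ ∀ j, q j + a j.succ + b j.castSucc = 0) ↔
      (∀ i, a i = a 0 + Fin.partialSum (fun j ↦ p - q j) i) ∧ ∀ i, b i = -(p + a i) := by
  have b_eq_iff : (∀ i, p + a i + b i = 0) ↔ ∀ i, b i = -(p + a i) :=
    forall_congr' fun i ↦ by rw [add_comm, add_eq_zero_iff_eq_neg]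
  rw [b_eq_iff, and_comm]
  refine and_congr_left fun hb ↦ ?_
  simp only [hb]
  refine ⟨fun h i ↦ ?_, fun h j ↦ ?_⟩
  · induction i using Fin.induction with
    | zero => simp
    | succ j ih =>
      rw [Fin.partialSum_succ, ← add_assoc, ← ih, ← sub_eq_zero, ← h j]
      abel
  · rw [h j.succ, h j.castSucc, Fin.partialSum_succ]
    abel

lemma partialSum_last (f : Fin N → X) : Fin.partialSum f (Fin.last N) = ∑ j, f j := by
  rw [Fin.partialSum, Fin.val_last, List.take_of_length_le (List.length_ofFn).le, List.sum_ofFn]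

/-- The values `t` at the tails, `γ` at the columns and `σ` at the symbols of the arcs sum to zero
on every arc. -/
def IsZeroSum (col : E → C) (sym : E → S) (t : E → X) (γ : C → X) (σ : S → X) : Prop :=
  ∀ e, t e + γ (col e) + σ (sym e) = 0

variable {col : E → C} {sym : E → S} {e₀ : E} {t : E → X} {p : X} {q : Fin N → X}

lemma sum_sub_update_const [NeZero N] (p w z : X) :
    ∑ j : Fin N, (p - Function.update (fun _ ↦ w) 0 z j) = N • (p - w) - (z - w) := by
  have sub_update (j : Fin N) :
      p - Function.update (fun _ ↦ w) 0 z j = (p - w) - if j = 0 then z - w else 0 := by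
    by_cases hj : j = 0 <;> simp [hj]
  simp [sub_update, smul_sub]

lemma isZeroSum_insertFace_iff {γ : C ⊕ Fin N → X} {σ : S ⊕ Fin N → X} :
    IsZeroSum (insertFace col e₀ (finSuccEquiv N)) (insertFace sym e₀ finSuccEquivLast)
        (Sum.elim t (Sum.elim (fun _ ↦ p) q)) γ σ ↔
      IsZeroSum col sym t (γ ∘ .inl) (σ ∘ .inl) ∧ t e₀ = p + ∑ j, (p - q j) ∧
        (∀ j, γ (.inr j) = γ (.inl (col e₀)) + Fin.partialSum (fun j ↦ p - q j) j.succ) ∧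
        ∀ j, σ (.inr j) =
          -(p + (γ (.inl (col e₀)) + Fin.partialSum (fun j ↦ p - q j) j.castSucc)) := by
  have chain := forall_add_eq_zero_iff_partialSum (p := p) (q := q)
    (a := fun i ↦ γ (insertFace col e₀ (finSuccEquiv N) (.inr (.inl i))))
    (b := fun i ↦ σ (insertFace sym e₀ finSuccEquivLast (.inr (.inl i))))
  simp only [insertFace, Sum.elim_inl, Sum.elim_inr, finSuccEquiv_zero, finSuccEquiv_succ,
    finSuccEquivLast_castSucc, Option.elim_none, Option.elim_some] at chain
  have sum_iff_of_old (h : IsZeroSum col sym t (γ ∘ .inl) (σ ∘ .inl)) :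
      σ (.inl (sym e₀)) = -(p + (γ (.inl (col e₀)) + ∑ j, (p - q j))) ↔
        t e₀ = p + ∑ j, (p - q j) := by
    rw [show σ (.inl (sym e₀)) = -(t e₀ + γ (.inl (col e₀))) from
      eq_neg_of_add_eq_zero_right (h e₀), neg_inj, add_left_comm p, add_comm (t e₀), add_right_inj]
  simp only [IsZeroSum, Sum.forall, insertFace, Sum.elim_inl, Sum.elim_inr, Function.comp_apply]
  refine and_congr_right fun h ↦ chain.trans ?_
  refine (and_congr_right fun ha ↦ forall_congr' fun _ ↦ by rw [ha]).trans ?_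
  simp only [Fin.forall_fin_succ (P := fun _ ↦ γ _ = _), Fin.forall_fin_succ',
    finSuccEquiv_zero, finSuccEquiv_succ, finSuccEquivLast_castSucc, finSuccEquivLast_last,
    Option.elim_none, Option.elim_some, Fin.partialSum_zero, add_zero, true_and, partialSum_last,
    sum_iff_of_old h]
  rw [and_comm (b := t e₀ = _), and_left_comm]

namespace IsZeroSum

lemma exists_insertFace {γ : C → X} {σ : S → X} (h : IsZeroSum col sym t γ σ)
    (ht : t e₀ = p + ∑ j, (p - q j)) :
    ∃ (γ' : C ⊕ Fin N → X) (σ' : S ⊕ Fin N → X), γ' ∘ .inl = γ ∧ σ' ∘ .inl = σ ∧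
      IsZeroSum (insertFace col e₀ (finSuccEquiv N)) (insertFace sym e₀ finSuccEquivLast)
        (Sum.elim t (Sum.elim (fun _ ↦ p) q)) γ' σ' :=
  ⟨Sum.elim γ fun j ↦ γ (col e₀) + Fin.partialSum (fun j ↦ p - q j) j.succ,
    Sum.elim σ fun j ↦ -(p + (γ (col e₀) + Fin.partialSum (fun j ↦ p - q j) j.castSucc)), rfl, rfl,
    isZeroSum_insertFace_iff.2 ⟨h, ht, fun _ ↦ rfl, fun _ ↦ rfl⟩⟩

lemma insertFace_unique {γ γ' : C ⊕ Fin N → X} {σ σ' : S ⊕ Fin N → X}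
    (h : IsZeroSum (insertFace col e₀ (finSuccEquiv N)) (insertFace sym e₀ finSuccEquivLast)
      (Sum.elim t (Sum.elim (fun _ ↦ p) q)) γ σ)
    (h' : IsZeroSum (insertFace col e₀ (finSuccEquiv N)) (insertFace sym e₀ finSuccEquivLast)
      (Sum.elim t (Sum.elim (fun _ ↦ p) q)) γ' σ')
    (hγ : γ ∘ .inl = γ' ∘ .inl) (hσ : σ ∘ .inl = σ' ∘ .inl) : γ = γ' ∧ σ = σ' := by
  obtain ⟨-, -, γ_new, σ_new⟩ := isZeroSum_insertFace_iff.1 h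
  obtain ⟨-, -, γ'_new, σ'_new⟩ := isZeroSum_insertFace_iff.1 h'
  have γ_eq (c : C) : γ (.inl c) = γ' (.inl c) := congrFun hγ c
  refine ⟨funext (Sum.forall.2 ⟨γ_eq, fun j ↦ ?_⟩),
    funext (Sum.forall.2 ⟨congrFun hσ, fun j ↦ ?_⟩)⟩
  · rw [γ_new, γ'_new, γ_eq]
  · rw [σ_new, σ'_new, γ_eq]

end IsZeroSum

end ZeroSum

section ZMod

variable {X Y : Type*} [AddCommGroup X] [AddCommGroup Y] {n : ℕ}

lemma existsUnique_zmod_hom {g : X} (hg : n • g = 0) : ∃! φ : ZMod n →+ X, φ 1 = g := by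
  let f : { f : ℤ →+ X // f n = 0 } := ⟨zmultiplesHom X g, by simpa using hg⟩
  refine ⟨ZMod.lift n f, ?_, fun φ hφ ↦ ?_⟩
  · simpa [f] using ZMod.lift_coe n f 1
  · ext a
    obtain ⟨z, rfl⟩ := ZMod.intCast_surjective a
    rw [ZMod.lift_coe, ← zsmul_one, map_zsmul, hφ]
    rfl

lemma existsUnique_prod_zmod_hom {θ : X →+ Y} {x : X} {g : Y} (hg : n • g = n • θ x) :
    ∃! ψ : X × ZMod n →+ Y, ψ.comp (.inl X (ZMod n)) = θ ∧ ψ (x, 1) = g := by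
  obtain ⟨φ, hφ, φ_unique⟩ := existsUnique_zmod_hom (n := n) (g := g - θ x) (by
    rw [smul_sub, hg, sub_self])
  refine ⟨θ.coprod φ, ⟨AddMonoidHom.coprod_comp_inl θ φ, by simp [hφ]⟩, fun ψ ⟨hθ, hg⟩ ↦ ?_⟩
  have inr_one : ψ.comp (.inr X (ZMod n)) 1 = g - θ x := by
    rw [← hθ, ← hg, AddMonoidHom.comp_apply, AddMonoidHom.comp_apply, ← map_sub]
    simp
  rw [← AddMonoidHom.coprod_unique ψ, hθ, φ_unique _ inr_one]

end ZMod

namespace AlternatingDigraph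

variable {R C S E : Type} [Fintype R] [Fintype C] [Fintype S] [Fintype E]

section Step

variable (M : AlternatingDigraph R C S E) (e₀ : E) (N K : ℕ) [NeZero N] [NeZero K]

/-- Two successive insertions: a new vertex `some none` on `e₀`, joined to the head of `e₀` by `N`
arcs back and `N + 1` arcs forth, then a new vertex `none` on the first arc back, near its tail,
joined to its tail by `K + 1` arcs entering and `K` arcs leaving the new vertex. -/
noncomputable def step : AlternatingDigraph (Option (Option R)) ((C ⊕ Fin N) ⊕ Fin K)
    ((S ⊕ Fin N) ⊕ Fin K) ((E ⊕ Fin (N + 1) ⊕ Fin N) ⊕ Fin (K + 1) ⊕ Fin K) :=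
  ((M.insert e₀ N).reverse.insert (.inr (.inr 0)) K).reverse

lemma loopless_step (h : ∀ e ≠ e₀, M.tail e ≠ M.head e) : (M.step e₀ N K).Loopless :=
  fun e ↦ ((M.insert e₀ N).reverse.loopless_insert _ K
    (fun f _ ↦ (M.loopless_insert e₀ N h f).symm) e).symm

lemma comp_tail_step {X : Type*} (row : Option (Option R) → X) :
    row ∘ (M.step e₀ N K).tail =
      Sum.elim
        (Sum.elim (row ∘ some ∘ some ∘ M.tail)
          (Sum.elim (fun _ ↦ row (some none))
            (Function.update (fun _ ↦ row (some (some (M.head e₀)))) 0 (row none))))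
        (Sum.elim (fun _ ↦ row (some (some (M.head e₀)))) fun _ ↦ row none) := by
  rw [show (M.step e₀ N K).tail = insertHead (insertTail M.tail M.head e₀) (.inr (.inr 0)) from rfl]
  simp only [insertHead, insertTail, Sum.comp_elim, Function.comp_update, Sum.update_elim_inr]
  rfl

end Step

/-- An assignment of elements of `X` to the vertices and faces such that
`row (tail e) + col (col e) + sym (sym e) = 0` for all arcs `e`. If the digraph is loopless, these
are the homomorphisms from `groupAW` of its bitrade to `X`. -/
@[ext]
structure Labelling (M : AlternatingDigraph R C S E) (X : Type) [AddCommGroup X] where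
  row : R → X
  col : C → X
  sym : S → X
  isZeroSum : IsZeroSum M.col M.sym (row ∘ M.tail) col sym

namespace Labelling

variable {M : AlternatingDigraph R C S E} {X Y : Type} [AddCommGroup X] [AddCommGroup Y]

/-- The image of a labelling under a homomorphism. -/
def map (ℓ : M.Labelling X) (θ : X →+ Y) : M.Labelling Y where
  row := θ ∘ ℓ.row
  col := θ ∘ ℓ.col
  sym := θ ∘ ℓ.sym
  isZeroSum e := by simpa using congrArg θ (ℓ.isZeroSum e)

/-- The difference of the labels of the two ends of an arc. -/
def diff (ℓ : M.Labelling X) (e : E) : X := ℓ.row (M.tail e) - ℓ.row (M.head e)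

lemma diff_map (ℓ : M.Labelling X) (θ : X →+ Y) (e : E) : (ℓ.map θ).diff e = θ (ℓ.diff e) :=
  (map_sub θ _ _).symm

section Step

variable {e₀ : E} {N K : ℕ} [NeZero N] [NeZero K]

lemma isZeroSum_inl (ℓ : (M.step e₀ N K).Labelling X) :
    IsZeroSum (M.insert e₀ N).col (M.insert e₀ N).sym
      (Sum.elim (ℓ.row ∘ some ∘ some ∘ M.tail) (Sum.elim (fun _ ↦ ℓ.row (some none))
        (Function.update (fun _ ↦ ℓ.row (some (some (M.head e₀)))) 0 (ℓ.row none))))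
      (ℓ.col ∘ .inl) (ℓ.sym ∘ .inl) := by
  have h := ℓ.isZeroSum
  rw [comp_tail_step] at h
  exact (isZeroSum_insertFace_iff.1 h).1

/-- The restriction of a labelling of `M.step e₀ N K` to `M`. -/
def restrict (ℓ : (M.step e₀ N K).Labelling X) : M.Labelling X where
  row r := ℓ.row (some (some r))
  col c := ℓ.col (.inl (.inl c))
  sym s := ℓ.sym (.inl (.inl s))
  isZeroSum := (isZeroSum_insertFace_iff.1 ℓ.isZeroSum_inl).1

/-- The difference of the labels of the first new vertex and the head of `e₀`. -/
def gap (ℓ : (M.step e₀ N K).Labelling X) : X :=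
  ℓ.row (some none) - ℓ.row (some (some (M.head e₀)))

lemma gap_map (ℓ : (M.step e₀ N K).Labelling X) (θ : X →+ Y) : (ℓ.map θ).gap = θ ℓ.gap :=
  (map_sub θ _ _).symm

lemma diff_marked (ℓ : (M.step e₀ N K).Labelling X) :
    ℓ.diff (.inr (.inr 0)) = ℓ.row none - ℓ.row (some (some (M.head e₀))) :=
  rfl

lemma smul_gap_eq (ℓ : (M.step e₀ N K).Labelling X) :
    (N + 1) • ℓ.gap = ℓ.restrict.diff e₀ + ℓ.diff (.inr (.inr 0)) := by
  have tail_e₀ := (isZeroSum_insertFace_iff.1 ℓ.isZeroSum_inl).2.1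
  simp only [sum_sub_update_const, Function.comp_apply] at tail_e₀
  rw [diff_marked, gap, diff]
  change (N + 1) • (_ - _) = ℓ.row (some (some _)) - ℓ.row (some (some _)) + _
  rw [tail_e₀]
  module

lemma smul_diff_eq_zero (ℓ : (M.step e₀ N K).Labelling X) :
    (K + 1) • ℓ.diff (.inr (.inr 0)) = 0 := by
  have h := ℓ.isZeroSum
  rw [comp_tail_step] at h
  have tail_e₁ := (isZeroSum_insertFace_iff.1 h).2.1
  simp only [Sum.elim_inr, Function.update_self, Finset.sum_const, Finset.card_univ,
    Fintype.card_fin] at tail_e₁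
  rw [diff_marked, ← sub_eq_zero.2 tail_e₁]
  module

lemma ext_of_restrict_of_gap {ℓ ℓ' : (M.step e₀ N K).Labelling X} (h : ℓ.restrict = ℓ'.restrict)
    (hgap : ℓ.gap = ℓ'.gap) : ℓ = ℓ' := by
  obtain ⟨hrow, hcol, hsym⟩ := Labelling.ext_iff.1 h
  have row_eq : ℓ.row = ℓ'.row := by
    have row_some_some (r : R) : ℓ.row (some (some r)) = ℓ'.row (some (some r)) := congrFun hrow r
    have diff_eq : ℓ.diff (.inr (.inr 0)) = ℓ'.diff (.inr (.inr 0)) := by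
      rw [← add_right_inj (ℓ.restrict.diff e₀), ← smul_gap_eq, h, ← smul_gap_eq, hgap]
    funext r
    rcases r with _ | _ | r
    · rwa [diff_marked, diff_marked, row_some_some, sub_left_inj] at diff_eq
    · rwa [gap, gap, row_some_some, sub_left_inj] at hgap
    · exact row_some_some r
  have zero_sum := ℓ.isZeroSum_inl
  have zero_sum' := ℓ'.isZeroSum_inl
  rw [← row_eq] at zero_sum'
  obtain ⟨hcol, hsym⟩ := zero_sum.insertFace_unique zero_sum' hcol hsym
  have zero_sum := ℓ.isZeroSum
  have zero_sum' := ℓ'.isZeroSum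
  rw [← row_eq] at zero_sum'
  rw [comp_tail_step] at zero_sum zero_sum'
  obtain ⟨hcol, hsym⟩ := zero_sum.insertFace_unique zero_sum' hcol hsym
  exact Labelling.ext row_eq hcol hsym

lemma exists_extension (ℓ : M.Labelling X) {g : X}
    (hg : ((K + 1) * (N + 1)) • g = (K + 1) • ℓ.diff e₀) :
    ∃ ℓ' : (M.step e₀ N K).Labelling X, ℓ'.restrict = ℓ ∧ ℓ'.gap = g := by
  let row : Option (Option R) → X
    | some (some r) => ℓ.row r
    | some none => g + ℓ.row (M.head e₀)
    | none => (N + 1) • g - ℓ.diff e₀ + ℓ.row (M.head e₀)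
  obtain ⟨γ₁, σ₁, hγ₁, hσ₁, h₁⟩ := ℓ.isZeroSum.exists_insertFace (e₀ := e₀) (p := row (some none))
    (q := Function.update (fun _ : Fin N ↦ row (some (some (M.head e₀)))) 0 (row none)) (by
      simp only [sum_sub_update_const, Function.comp_apply, row, diff]
      module)
  obtain ⟨γ, σ, hγ, hσ, h⟩ := h₁.exists_insertFace (e₀ := .inr (.inr 0))
    (p := row (some (some (M.head e₀)))) (q := fun _ : Fin K ↦ row none) (by
      simp only [Sum.elim_inr, Function.update_self, Finset.sum_const, Finset.card_univ,
        Fintype.card_fin, row]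
      rw [← sub_eq_zero] at hg ⊢
      rw [← hg]
      module)
  refine ⟨⟨row, γ, σ, ?_⟩, Labelling.ext rfl ?_ ?_, ?_⟩
  · rw [comp_tail_step]
    exact h
  · simp only [restrict, ← hγ₁, ← hγ]
    rfl
  · simp only [restrict, ← hσ₁, ← hσ]
    rfl
  · simp [gap, row]

end Step

/-- Through which every labelling factors uniquely, so that it identifies its group with the one
generated by the vertices and faces subject to one relation for each arc. -/
def IsUniversal (ℓ : M.Labelling X) : Prop :=
  ∀ (Y : Type) [AddCommGroup Y] (ℓ' : M.Labelling Y), ∃! θ : X →+ Y, ℓ.map θ = ℓ'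

lemma IsUniversal.nonempty_addEquiv {ℓ : M.Labelling X} {ℓ' : M.Labelling Y} (h : ℓ.IsUniversal)
    (h' : ℓ'.IsUniversal) : Nonempty (X ≃+ Y) := by
  obtain ⟨θ, hθ, -⟩ := h Y ℓ'
  obtain ⟨θ', hθ', -⟩ := h' X ℓ
  refine ⟨θ.toAddEquiv θ' ?_ ?_⟩
  · exact (h X ℓ).unique ((congrArg (map · θ') hθ).trans hθ') rfl
  · exact (h' Y ℓ').unique ((congrArg (map · θ) hθ').trans hθ) rfl

lemma IsUniversal.exists_step {ℓ : M.Labelling X} (h : ℓ.IsUniversal) {e₀ : E} {N K : ℕ}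
    [NeZero N] [NeZero K] {y : X} (hy : ((K + 1) * (N + 1)) • y = (K + 1) • ℓ.diff e₀) :
    ∃ ℓ' : (M.step e₀ N K).Labelling (X × ZMod ((K + 1) * (N + 1))), ℓ'.IsUniversal := by
  set n := (K + 1) * (N + 1)
  obtain ⟨ℓ', restrict_eq, gap_eq⟩ := (ℓ.map (AddMonoidHom.inl X (ZMod n))).exists_extension
    (e₀ := e₀) (N := N) (K := K) (g := (y, 1)) (by
      rw [diff_map]
      exact Prod.ext (by simpa using hy) (by simp [n]))
  refine ⟨ℓ', fun Y _ ℓ'' ↦ ?_⟩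
  obtain ⟨θ, hθ, θ_unique⟩ := h Y ℓ''.restrict
  have smul_gap : n • ℓ''.gap = n • θ y := by
    rw [← map_nsmul, hy, map_nsmul, ← diff_map, hθ, mul_smul, smul_gap_eq, smul_add,
      smul_diff_eq_zero, add_zero]
  obtain ⟨ψ, ⟨ψ_inl, ψ_mk⟩, ψ_unique⟩ := existsUnique_prod_zmod_hom smul_gap
  refine ⟨ψ, ext_of_restrict_of_gap ?_ ?_, fun ψ' hψ' ↦ ψ_unique ψ' ⟨θ_unique _ ?_, ?_⟩⟩
  · rw [← hθ, ← ψ_inl]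
    exact congrArg (map · ψ) restrict_eq
  · rw [← ψ_mk, ← gap_eq, gap_map]
  · rw [← hψ']
    exact (congrArg (map · ψ') restrict_eq).symm
  · rw [← gap_eq, ← gap_map, hψ']

end Labelling

end AlternatingDigraph

/-! ### Realizing direct sums of cyclic groups -/

section Torsion

variable {A B F : Type*} [AddCommGroup A] [AddCommGroup B] [AddCommGroup F]

lemma nonempty_torsion_addEquiv [IsAddTorsionFree B] (hF : IsAddTorsion F)
    (e : A ≃+ B × F) : Nonempty (AddCommGroup.torsion A ≃+ F) := by
  have map_eq : (AddCommGroup.torsion A).map e.toAddMonoidHom = (⊥ : AddSubgroup B).prod ⊤ := by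
    rw [← AddCommGroup.isAddTorsionFree_iff_torsion_eq_bot.1 ‹_›,
      ← AddCommGroup.torsion_eq_top_iff.2 hF, ← AddCommGroup.torsion_sum]
    exact e.map_torsion
  exact ⟨(e.addSubgroupMap _).trans <| (AddEquiv.addSubgroupCongr map_eq).trans <|
    (AddSubgroup.prodEquiv _ _).trans <| AddEquiv.uniqueProd.trans AddSubgroup.topEquiv⟩

end Torsion

lemma exists_prime_mul_nsmul_eq {X : Type*} [AddCommGroup X] {x : X} {p n : ℕ} (hp : p.Prime)
    (hx : p • x = 0) (hn : 2 ≤ n) (hn' : ¬ n.Prime) :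
    ∃ m k, m.Prime ∧ 2 ≤ k ∧ n = m * k ∧ ∃ y : X, n • y = m • x := by
  suffices ∃ m, m.Prime ∧ m ∣ n ∧ ∃ y : X, n • y = m • x by
    obtain ⟨m, hm, ⟨k, rfl⟩, hy⟩ := this
    refine ⟨m, k, hm, (Nat.two_le_iff k).2 ⟨?_, ?_⟩, rfl, hy⟩
    · rintro rfl
      omega
    · rintro rfl
      exact hn' (by rwa [mul_one])
  by_cases hpn : p ∣ n
  · exact ⟨p, hp, hpn, 0, by rw [hx, smul_zero]⟩
  · have coprime : n.Coprime (addOrderOf x) :=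
      ((hp.coprime_iff_not_dvd.2 hpn).symm).coprime_dvd_right (addOrderOf_dvd_of_nsmul_eq_zero hx)
    obtain ⟨u, hu⟩ := exists_nsmul_eq_self_of_coprime coprime
    refine ⟨n.minFac, Nat.minFac_prime (by omega), n.minFac_dvd, (n.minFac * u) • x, ?_⟩
    rw [mul_smul, smul_comm n, smul_comm n, hu]

namespace AlternatingDigraph

variable {R C S E : Type} [Fintype R] [Fintype C] [Fintype S] [Fintype E]
  {M : AlternatingDigraph R C S E}

namespace Labelling

lemma IsUniversal.map_addEquiv {X Y : Type} [AddCommGroup X] [AddCommGroup Y] {ℓ : M.Labelling X}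
    (h : ℓ.IsUniversal) (e : X ≃+ Y) : (ℓ.map (e : X →+ Y)).IsUniversal := fun Z _ ℓ' ↦ by
  obtain ⟨θ, hθ, θ_unique⟩ := h Z ℓ'
  refine ⟨θ.comp e.symm, ?_, fun θ' hθ' ↦ ?_⟩
  · rw [← hθ]
    exact Labelling.ext (by funext; simp [map]) (by funext; simp [map]) (by funext; simp [map])
  · rw [← θ_unique (θ'.comp e) hθ']
    ext
    simp

/-- The universal labelling of the one-vertex digraph. -/
def base : loop.Labelling (ℤ × ℤ) where
  row _ := (1, 0)
  col _ := (0, 1)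
  sym _ := (-1, -1)
  isZeroSum _ := rfl

lemma isUniversal_base : base.IsUniversal := fun X _ ℓ ↦ by
  have sym_eq : ℓ.sym () = -(ℓ.row () + ℓ.col ()) := eq_neg_of_add_eq_zero_right (ℓ.isZeroSum ())
  refine ⟨(zmultiplesHom X (ℓ.row ())).coprod (zmultiplesHom X (ℓ.col ())),
    Labelling.ext ?_ ?_ ?_, fun θ hθ ↦ ?_⟩
  · funext; simp [map, base]
  · funext; simp [map, base]
  · funext
    simp only [map, base, Function.comp_apply, AddMonoidHom.coprod_apply, zmultiplesHom_apply,
      neg_smul, one_smul, sym_eq]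
    abel
  · rw [← hθ, ← AddMonoidHom.coprod_unique θ]
    congr 1 <;> ext <;> simp [map, base]

variable [Nonempty E]

/-- The labelling by the classes of the generators of `groupAW`. -/
noncomputable def canonical (h : M.Loopless) : M.Labelling (groupAW (M.bitrade h)) where
  row r := QuotientAddGroup.mk (.of (.inl r))
  col c := QuotientAddGroup.mk (.of (.inr (.inl c)))
  sym s := QuotientAddGroup.mk (.of (.inr (.inr s)))
  isZeroSum e := (QuotientAddGroup.eq_zero_iff _).2
    (AddSubgroup.subset_closure ⟨_, M.triple_mem_triples e, rfl⟩)

lemma isUniversal_canonical (h : M.Loopless) : (canonical h).IsUniversal := fun X _ ℓ ↦ by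
  let lift : FreeAbelianGroup (R ⊕ C ⊕ S) →+ X :=
    FreeAbelianGroup.lift (Sum.elim ℓ.row (Sum.elim ℓ.col ℓ.sym))
  have relations_le : bitradeRelations (M.bitrade h) ≤ lift.ker := by
    refine (AddSubgroup.closure_le _).2 ?_
    rintro _ ⟨x, hx, rfl⟩
    obtain ⟨e, rfl⟩ := M.mem_triples.1 hx
    change lift (.of (.inl (M.tail e)) + .of (.inr (.inl (M.col e))) +
      .of (.inr (.inr (M.sym e)))) = 0
    simpa [lift] using ℓ.isZeroSum e
  refine ⟨QuotientAddGroup.lift _ lift relations_le, Labelling.ext ?_ ?_ ?_, fun θ hθ ↦ ?_⟩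
  · exact funext fun _ ↦ FreeAbelianGroup.lift_apply_of _ _
  · exact funext fun _ ↦ FreeAbelianGroup.lift_apply_of _ _
  · exact funext fun _ ↦ FreeAbelianGroup.lift_apply_of _ _
  · subst hθ
    ext (r | c | s) <;> exact (FreeAbelianGroup.lift_apply_of _ _).symm

end Labelling

/-- An alternating digraph with group `(ℤ × ℤ) × F`, by way of a universal labelling, and an arc at
which `step` can be applied: no other arc is a loop, and a prime kills its difference. -/
structure Realization (F : Type) [AddCommGroup F] where
  {R C S E : Type}
  [instR : Fintype R]
  [instC : Fintype C]
  [instS : Fintype S]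
  [instE : Fintype E]
  digraph : AlternatingDigraph R C S E
  arc : E
  labelling : digraph.Labelling ((ℤ × ℤ) × F)
  isUniversal : labelling.IsUniversal
  tail_ne_head : ∀ e ≠ arc, digraph.tail e ≠ digraph.head e
  exists_prime : ∃ p : ℕ, p.Prime ∧ p • labelling.diff arc = 0

namespace Realization

attribute [instance] instR instC instS instE

lemma exists_loopless {F F' : Type} [AddCommGroup F] [AddCommGroup F'] (ρ : Realization F) {n : ℕ}
    (hn : 2 ≤ n) (hn' : ¬ n.Prime) (e : ZMod n × F ≃+ F') :
    ∃ ρ' : Realization F', ρ'.digraph.Loopless := by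
  obtain ⟨p, hp, hpx⟩ := ρ.exists_prime
  obtain ⟨m, k, hm, hk, rfl, y, hy⟩ := exists_prime_mul_nsmul_eq hp hpx hn hn'
  obtain ⟨K, rfl⟩ : ∃ K, m = K + 1 := Nat.exists_eq_succ_of_ne_zero hm.ne_zero
  obtain ⟨N, rfl⟩ : ∃ N, k = N + 1 := Nat.exists_eq_succ_of_ne_zero (by omega)
  have : NeZero K := ⟨by rintro rfl; exact hm.ne_one rfl⟩
  have : NeZero N := ⟨by omega⟩
  obtain ⟨ℓ, hℓ⟩ := ρ.isUniversal.exists_step hy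
  have loopless := ρ.digraph.loopless_step ρ.arc N K ρ.tail_ne_head
  let e' : ((ℤ × ℤ) × F) × ZMod ((K + 1) * (N + 1)) ≃+ (ℤ × ℤ) × F' :=
    AddEquiv.prodAssoc.trans ((AddEquiv.refl _).prodCongr (AddEquiv.prodComm.trans e))
  exact ⟨⟨_, .inr (.inr 0), _, hℓ.map_addEquiv e', fun e _ ↦ loopless e, K + 1, hm, by
    rw [Labelling.diff_map, ← map_nsmul, ℓ.smul_diff_eq_zero, map_zero]⟩, loopless⟩

lemma nonempty_pi_zmod {k : ℕ} (n : Fin k → ℕ) (hn : ∀ i, 2 ≤ n i ∧ ¬ (n i).Prime) :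
    Nonempty (Realization (∀ i, ZMod (n i))) := by
  induction k with
  | zero =>
    exact ⟨⟨loop, (), _, Labelling.isUniversal_base.map_addEquiv AddEquiv.prodUnique.symm,
      fun _ h ↦ (h rfl).elim, 2, Nat.prime_two, by simp [Labelling.diff, loop]⟩⟩
  | succ k ih =>
    obtain ⟨ρ⟩ := ih (fun i ↦ n i.succ) fun i ↦ hn i.succ
    obtain ⟨ρ', -⟩ := ρ.exists_loopless (hn 0).1 (hn 0).2
      (Fin.consLinearEquiv ℤ fun i ↦ ZMod (n i)).toAddEquiv
    exact ⟨ρ'⟩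

lemma exists_canonicalGroup_addEquiv {F : Type} [AddCommGroup F] (hF : IsAddTorsion F)
    (ρ : Realization F) (h : ρ.digraph.Loopless) :
    ∃ T : SphericalLatinBitrade, Nonempty (CanonicalGroup T ≃+ F) := by
  have : Nonempty ρ.E := ⟨ρ.arc⟩
  obtain ⟨e⟩ := (Labelling.isUniversal_canonical h).nonempty_addEquiv ρ.isUniversal
  exact ⟨ρ.digraph.bitrade h, nonempty_torsion_addEquiv hF e⟩

end Realization

end AlternatingDigraph

/-- For `k ≥ 1` and composite integers `n_1, …, n_k` there is a spherical latin bitrade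
whose canonical group is isomorphic to `ℤ/n_1 ⊕ ⋯ ⊕ ℤ/n_k`. -/
theorem exists_spherical_bitrade_canonical_group_composites
    (k : ℕ) (hk : 1 ≤ k) (n : Fin k → ℕ)
    (hn : ∀ i, ∃ b c : ℕ, 2 ≤ b ∧ 2 ≤ c ∧ n i = b * c) :
    ∃ T : SphericalLatinBitrade,
      Nonempty (CanonicalGroup T ≃+ ((i : Fin k) → ZMod (n i))) := by
  have composite (i : Fin k) : 2 ≤ n i ∧ ¬ (n i).Prime := by
    obtain ⟨b, c, hb, hc, h⟩ := hn i
    exact ⟨by nlinarith, h ▸ Nat.not_prime_mul (by omega) (by omega)⟩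
  have (i : Fin k) : NeZero (n i) := ⟨by have := (composite i).1; omega⟩
  obtain ⟨k, rfl⟩ : ∃ l, k = l + 1 := Nat.exists_eq_succ_of_ne_zero (by omega)
  obtain ⟨ρ⟩ := AlternatingDigraph.Realization.nonempty_pi_zmod (fun i ↦ n i.succ) fun i ↦
    composite i.succ
  obtain ⟨ρ', loopless⟩ := ρ.exists_loopless (composite 0).1 (composite 0).2
    (Fin.consLinearEquiv ℤ fun i ↦ ZMod (n i)).toAddEquiv
  exact ρ'.exists_canonicalGroup_addEquiv isAddTorsion_of_finite loopless
end
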